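/- arXiv:1709.06732 — 3 statements merged into one kernel-verified Lean document; each statement's English description precedes it below -/
import Mathlib

section
/- The system of equations Z₁³ + Z₂³ + 9Z₃³ = 0 and 3^a Z₁ + 3^b Z₂ + Z₃ = 0 has no solution (a, b, [Z₁ : Z₂ : Z₃]) where a > b ≥ 0 are integers and [Z₁ : Z₂ : Z₃] ∈ ℙ²(ℚ). (This is the Brassil–Reichstein conjecture.) -/
/-!
Eliminating `Z₃` leaves `x ^ 3 + y ^ 3 = 9 * 27 ^ b * (3 ^ c * x + y) ^ 3` with `c = a - b > 0`,
where `x` and `y` may be taken to be coprime integers with `y > 0`. Then `x < 0`, and reduction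
modulo `x` shows `|x| < 9 * 27 ^ b`. With `z = 3 ^ b * (3 ^ c * x + y)` the equation becomes
`y ^ 3 = |x| ^ 3 + 9 * z ^ 3`, so `y / z` is a very good approximation to `∛9` as soon as `y` is
large compared with `|x|`.

* `y` is large. For `b ≥ 6`, a `3`-descent over the Eisenstein integers replaces a coprime solution
  of `x ^ 3 + y ^ 3 = 9 * z ^ 3` with `3 ^ b ∣ z` by one with `3 ^ (b - 1) ∣ z`, while `max |x| |y|`
  drops at least to its eighth root; hence `y ≥ 2 ^ 8 ^ b`. For `b ≤ 5`, congruences modulo primes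
  `p` for which `3` has small order force `c ≥ 51000`, and `y ≥ 3 ^ c`.
* `∛9` is not approximable that well. The Padé approximants to `s ^ (1 / 3)` at `s = 9 / 8` have
  denominators with a large common factor, and they give `y < |x| ^ 3000` once `y ≥ 3 ^ 51000`.
-/

/-! ### Denominators of products of binomial coefficients at `± 1 / 3` -/

section Integrality

open Finset
open scoped Nat

theorem six_mul_div_add_div_le (m : ℕ) {q : ℕ} (hq : 0 < q) :
    6 * m / q + m / q ≤ 4 * m / q + 3 * m / q +
      if q ≤ 6 * (m % q) ∧ 4 * (m % q) < q then 1 else 0 := by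
  have hr : m % q < q := Nat.mod_lt _ hq
  have hdiv : ∀ a, a * m / q = a * (m / q) + a * (m % q) / q := fun a => by
    conv_lhs => rw [← Nat.div_add_mod m q, mul_add, mul_left_comm, Nat.mul_add_div hq]
  rw [hdiv 6, hdiv 4, hdiv 3]
  generalize m % q = r at *
  have hsix := Nat.div_add_mod (6 * r) q
  have hfour := Nat.div_add_mod (4 * r) q
  have hthree := Nat.div_add_mod (3 * r) q
  have hsix_lt := Nat.mod_lt (6 * r) hq
  have hfour_lt := Nat.mod_lt (4 * r) hq
  have hthree_lt := Nat.mod_lt (3 * r) hq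
  have hsix_div : 6 * r / q < 6 := (Nat.div_lt_iff_lt_mul hq).2 (by lia)
  have hfour_div : 4 * r / q < 4 := (Nat.div_lt_iff_lt_mul hq).2 (by lia)
  have hthree_div : 3 * r / q < 3 := (Nat.div_lt_iff_lt_mul hq).2 (by lia)
  generalize 6 * r / q = A at *
  generalize 4 * r / q = B at *
  generalize 3 * r / q = C at *
  split_ifs <;> interval_cases A <;> interval_cases B <;> interval_cases C <;> omega

theorem three_mul_mod_eq_of_three_mul_modEq_one {q N : ℕ} (hq : 1 < q) (hN : 3 * N ≡ 1 [MOD q]) :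
    3 * (N % q) = 1 + q ∨ 3 * (N % q) = 1 + 2 * q := by
  have hmod : 3 * (N % q) % q = 1 := by
    rw [Nat.mul_mod_mod, hN, Nat.mod_eq_of_lt hq]
  have hdiv := Nat.div_add_mod (3 * (N % q)) q
  have hlt : N % q < q := Nat.mod_lt _ (by lia)
  have hdiv_lt : 3 * (N % q) / q < 3 := (Nat.div_lt_iff_lt_mul (by lia)).2 (by lia)
  rw [hmod] at hdiv
  generalize 3 * (N % q) / q = d at *
  interval_cases d <;> lia

/- In the exceptional range `1 / 6 ≤ (m % q) / q < 1 / 4`, where the factorials lose a factor,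
the sum `k + l = 4 * m` forces a carry in one of the two binomial coefficients. -/
theorem exists_carry {m q k l N N' : ℕ} (hq : 1 < q) (hkl : k + l = 4 * m)
    (hN : 3 * N ≡ 1 [MOD q]) (hNN' : q ∣ N + N') (hsix : q ≤ 6 * (m % q))
    (hfour : 4 * (m % q) < q) : q ≤ k % q + (l + N) % q ∨ q ≤ l % q + (k + N') % q := by
  by_contra! hcarry
  have hν := three_mul_mod_eq_of_three_mul_modEq_one hq hN
  have hν_lt : N % q < q := Nat.mod_lt _ (by lia)
  have hνν' : N % q + N' % q = q := by
    obtain ⟨c, hc⟩ : q ∣ N % q + N' % q :=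
      Nat.dvd_of_mod_eq_zero (by rw [← Nat.add_mod, Nat.mod_eq_zero_of_dvd hNN'])
    have hν'_lt : N' % q < q := Nat.mod_lt _ (by lia)
    obtain rfl : c = 1 := by
      have hc_lt : c < 2 := lt_of_mul_lt_mul_left (a := q) (by lia) (by lia)
      interval_cases c <;> lia
    lia
  have hfour_mod : 4 * m % q = 4 * (m % q) := by
    rw [← Nat.mul_mod_mod, Nat.mod_eq_of_lt hfour]
  have hmod : ∀ M, 4 * (m % q) + M % q < 2 * q → q ≤ 4 * (m % q) + M % q →
      (k + l + M) % q = 4 * (m % q) + M % q - q := fun M hlt hle => by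
    rw [hkl, Nat.add_mod, hfour_mod, Nat.mod_eq_sub_mod hle]
    exact Nat.mod_eq_of_lt (by lia)
  have hk := Nat.add_mod_of_add_mod_lt hcarry.1
  have hl := Nat.add_mod_of_add_mod_lt hcarry.2
  rw [← add_assoc, hmod N (by lia) (by lia)] at hk
  rw [show l + (k + N') = k + l + N' by ring, hmod N' (by lia) (by lia)] at hl
  have hsum : (k % q + l % q) % q = 4 * (m % q) := by
    rw [← Nat.add_mod, hkl, hfour_mod]
  rw [Nat.mod_eq_of_lt (by lia)] at hsum
  lia

/-- `3 ^ k * k! * choose (n + ε / 3) k`, written as a product of integers. -/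
def thirdsDescFactorial (ε : ℤ) (n k : ℕ) : ℤ :=
  ∏ j ∈ range k, (3 * (n - j) + ε)

theorem thirdsDescFactorial_modEq {ε : ℤ} {N Q : ℕ} (hN : 3 * N ≡ ε [ZMOD Q]) (n k : ℕ) :
    thirdsDescFactorial ε n k ≡ 3 ^ k * (n + N).descFactorial k [ZMOD Q] := by
  have hprod : (3 ^ k * (n + N).descFactorial k : ℤ) =
      ∏ j ∈ range k, (3 * (n - j) + 3 * N : ℤ) := by
    calc (3 ^ k * (n + N).descFactorial k : ℤ) = ∏ j ∈ range k, (3 * ((n + N : ℕ) - j) : ℤ) := by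
          rw [← descPochhammer_eval_eq_descFactorial, descPochhammer_eval_eq_prod_range,
            prod_mul_distrib, prod_const, card_range]
      _ = ∏ j ∈ range k, (3 * (n - j) + 3 * N : ℤ) :=
          prod_congr rfl fun j _ => by push_cast; ring
  rw [hprod, thirdsDescFactorial]
  exact Int.ModEq.prod fun j _ => hN.symm.add_left _

theorem factorization_factorial_add_le {p K m k l N N' : ℕ} (hp : p.Prime) (hK : 6 * m < p ^ K)
    (hkl : k + l = 4 * m) (hN : 3 * N ≡ 1 [MOD p ^ K]) (hNN' : N + N' = p ^ K) :
    (6 * m)!.factorization p + (m !).factorization p ≤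
      (4 * m)!.factorization p + (3 * m)!.factorization p +
        (((4 * m + N).choose k).factorization p + ((4 * m + N').choose l).factorization p) := by
  have hlog : ∀ {x}, x < 2 * p ^ K → Nat.log p x < K + 1 := fun {x} hx =>
    Nat.log_lt_of_lt_pow' (by lia)
      (hx.trans_le (by rw [Nat.pow_succ']; exact Nat.mul_le_mul_right _ hp.two_le))
  rw [← hkl, show k + l + N = l + N + k by ring, show k + l + N' = k + N' + l by ring,
    Nat.factorization_choose' hp (hlog (by lia)), Nat.factorization_choose' hp (hlog (by lia)),
    hkl, Nat.factorization_factorial hp (hlog (by lia)),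
    Nat.factorization_factorial hp (hlog (by lia)), Nat.factorization_factorial hp (hlog (by lia)),
    Nat.factorization_factorial hp (hlog (by lia)), card_filter, card_filter]
  simp only [← sum_add_distrib]
  refine sum_le_sum fun i hi => ?_
  obtain ⟨hi_pos, hi_lt⟩ := mem_Ico.1 hi
  have hdvd : p ^ i ∣ p ^ K := pow_dvd_pow p (by lia)
  have hq : 1 < p ^ i := Nat.one_lt_pow (by lia) hp.one_lt
  refine (six_mul_div_add_div_le m (by lia)).trans (Nat.add_le_add_left ?_ _)
  by_cases hexc : p ^ i ≤ 6 * (m % p ^ i) ∧ 4 * (m % p ^ i) < p ^ i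
  · have hcarry := exists_carry hq hkl (hN.of_dvd hdvd) (hNN' ▸ hdvd) hexc.1 hexc.2
    split_ifs <;> lia
  · rw [if_neg hexc]
    exact Nat.zero_le _

theorem exists_third_mod {p : ℕ} (hp : p.Prime) (h3 : p ≠ 3) (K : ℕ) :
    ∃ N N' : ℕ, 3 * N ≡ 1 [MOD p ^ K] ∧ N + N' = p ^ K := by
  have hcop : Nat.Coprime 3 (p ^ K) :=
    ((Nat.coprime_primes Nat.prime_three hp).2 h3.symm).pow_right K
  obtain ⟨N, hN_lt, hN⟩ := Nat.exists_mul_mod_eq_of_coprime 1 hcop (pow_ne_zero K hp.ne_zero)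
  exact ⟨N, p ^ K - N, hN, by lia⟩

theorem factorization_three_factorial_add_le (m : ℕ) :
    (6 * m)!.factorization 3 + (m !).factorization 3 ≤ 2 * m + (3 * m)!.factorization 3 := by
  have hsix : (6 * m)!.factorization 3 = (2 * m)!.factorization 3 + 2 * m := by
    rw [show 6 * m = 3 * (2 * m) by ring, Nat.factorization_factorial_mul Nat.prime_three]
  have hthree : (3 * m)!.factorization 3 = (m !).factorization 3 + m :=
    Nat.factorization_factorial_mul Nat.prime_three
  have htwo := Nat.factorization_factorial_le_div_pred Nat.prime_three (2 * m)
  lia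

variable {m k l : ℕ}

theorem three_pow_dvd_of_dvd_factorial_mul {e : ℕ} (hkl : k + l = 4 * m)
    (he : 3 ^ e ∣ (6 * m)! * m ! * (k ! * l !)) :
    3 ^ e ∣ 3 ^ (2 * m) * ((4 * m)! * (3 * m)!) := by
  rw [Nat.prime_three.pow_dvd_iff_le_factorization (by positivity)] at he ⊢
  have hkl_dvd : k ! * l ! ∣ (4 * m)! := hkl ▸ Nat.factorial_mul_factorial_dvd_factorial_add k l
  have hkl_le := (Nat.factorization_le_iff_dvd (by positivity) (by positivity)).2 hkl_dvd 3
  have hfact := factorization_three_factorial_add_le m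
  rw [Nat.factorization_mul (by positivity) (by positivity),
    Nat.factorization_mul (by positivity) (by positivity)] at he ⊢
  simp only [Finsupp.add_apply, Nat.prime_three.factorization_pow, Finsupp.single_eq_same] at he ⊢
  lia

theorem pow_dvd_of_dvd_factorial_mul {p K e N N' : ℕ} (hp : p.Prime) (hK : 6 * m < p ^ K)
    (hkl : k + l = 4 * m) (hN : 3 * N ≡ 1 [MOD p ^ K]) (hNN' : N + N' = p ^ K)
    (he : p ^ e ∣ (6 * m)! * m ! * (k ! * l !)) :
    p ^ e ∣ (4 * m)! * (3 * m)! *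
      ((4 * m + N).descFactorial k * (4 * m + N').descFactorial l) := by
  have hfact := factorization_factorial_add_le hp hK hkl hN hNN'
  have hchoose : (4 * m + N).choose k ≠ 0 := (Nat.choose_pos (by lia)).ne'
  have hchoose' : (4 * m + N').choose l ≠ 0 := (Nat.choose_pos (by lia)).ne'
  rw [Nat.descFactorial_eq_factorial_mul_choose, Nat.descFactorial_eq_factorial_mul_choose,
    mul_mul_mul_comm (k !)]
  rw [hp.pow_dvd_iff_le_factorization (by positivity)] at he ⊢
  simp only [Nat.factorization_mul, ne_eq, mul_eq_zero, Nat.factorial_ne_zero, hchoose, hchoose',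
    or_self, not_false_eq_true, Finsupp.add_apply] at he ⊢
  lia

theorem factorial_mul_dvd_thirdsDescFactorial (hkl : k + l = 4 * m) :
    (((6 * m)! * m ! * (k ! * l !) : ℕ) : ℤ) ∣ 3 ^ (2 * m) * ((4 * m)! * (3 * m)!) *
      (thirdsDescFactorial 1 (4 * m) k * thirdsDescFactorial (-1) (4 * m) l) := by
  rw [Int.natCast_dvd, Nat.dvd_iff_prime_pow_dvd_dvd]
  intro p e hp he
  rw [← Int.natCast_dvd]
  rcases eq_or_ne p 3 with rfl | h3
  · exact Dvd.dvd.mul_right (mod_cast three_pow_dvd_of_dvd_factorial_mul hkl he) _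
  have hK : 6 * m < p ^ (e + 6 * m) :=
    (Nat.lt_pow_self hp.one_lt).trans_le (Nat.pow_le_pow_right hp.pos (by lia))
  obtain ⟨N, N', hN, hNN'⟩ := exists_third_mod hp h3 (e + 6 * m)
  have hN₁ : 3 * (N : ℤ) ≡ 1 [ZMOD (p ^ (e + 6 * m) : ℕ)] := by
    exact_mod_cast Int.natCast_modEq_iff.2 hN
  have hN₂ : 3 * (N' : ℤ) ≡ -1 [ZMOD (p ^ (e + 6 * m) : ℕ)] := by
    obtain ⟨c, hc⟩ := hN₁.dvd
    exact Int.modEq_iff_dvd.2 ⟨-3 - c, by rw [← hNN'] at hc ⊢; push_cast at hc ⊢; linarith⟩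
  have hmod := ((thirdsDescFactorial_modEq hN₁ (4 * m) k).mul
    (thirdsDescFactorial_modEq hN₂ (4 * m) l)).mul_left (3 ^ (2 * m) * ((4 * m)! * (3 * m)!))
  have hpow : ((p ^ e : ℕ) : ℤ) ∣ (p ^ (e + 6 * m) : ℕ) :=
    Int.natCast_dvd_natCast.2 (pow_dvd_pow p (by lia))
  obtain ⟨c, hc⟩ := pow_dvd_of_dvd_factorial_mul hp hK hkl hN hNN' he
  refine (hmod.of_dvd hpow).dvd_iff.2 ⟨3 ^ (2 * m) * 3 ^ k * 3 ^ l * c, ?_⟩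
  zify at hc
  push_cast
  linear_combination 3 ^ (2 * m) * 3 ^ k * 3 ^ l * hc

end Integrality

/-! ### Padé approximants to `s ^ ν` at `s = 1` -/

section Pade

open Finset Polynomial
open scoped Nat

theorem ring_choose_eq_prod_div_factorial (r : ℝ) (k : ℕ) :
    Ring.choose r k = (∏ j ∈ range k, (r - j)) / k ! := by
  rw [Ring.choose_eq_smul, ← aeval_eq_smeval, aeval_def, ← eval_map, descPochhammer_map,
    descPochhammer_eval_eq_prod_range, smul_eq_mul, inv_mul_eq_div]

theorem succ_mul_ring_choose_succ (r : ℝ) (k : ℕ) :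
    (k + 1) * Ring.choose r (k + 1) = (r - k) * Ring.choose r k := by
  rw [ring_choose_eq_prod_div_factorial, ring_choose_eq_prod_div_factorial, prod_range_succ,
    Nat.factorial_succ]
  push_cast
  field_simp

theorem ring_choose_pos {r : ℝ} {k : ℕ} (hk : k < r + 1) : 0 < Ring.choose r k := by
  rw [ring_choose_eq_prod_div_factorial]
  refine div_pos (prod_pos fun j hj => ?_) (by positivity)
  have hj' : (j : ℝ) + 1 ≤ k := mod_cast mem_range.1 hj
  linarith

theorem ring_choose_le_ring_choose {r r' : ℝ} {k : ℕ} (hk : k ≤ r + 1) (hr : r ≤ r') :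
    Ring.choose r k ≤ Ring.choose r' k := by
  rw [ring_choose_eq_prod_div_factorial, ring_choose_eq_prod_div_factorial]
  refine div_le_div_of_nonneg_right (prod_le_prod (fun j hj => ?_) fun j _ => by gcongr)
    (by positivity)
  have hj' : (j : ℝ) + 1 ≤ k := mod_cast mem_range.1 hj
  linarith

/-- The polynomial `∑ k ≤ n, choose (n + ν) k * choose (n - ν) (n - k) * X ^ k`. The quotient of
`padePoly ν n` by `padePoly (-ν) n` is the `[n / n]` Padé approximant to `s ^ ν` at `s = 1`. -/
noncomputable def padePoly (ν : ℝ) (n : ℕ) : ℝ[X] :=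
  ∑ k ∈ range (n + 1), monomial k (Ring.choose (n + ν) k * Ring.choose (n - ν) (n - k))

variable {ν s : ℝ} {n k : ℕ}

theorem coeff_padePoly (hk : k ≤ n) :
    (padePoly ν n).coeff k = Ring.choose (n + ν) k * Ring.choose (n - ν) (n - k) := by
  simp [padePoly, finsetSum_coeff, coeff_monomial, hk]

theorem natDegree_padePoly_le : (padePoly ν n).natDegree ≤ n :=
  natDegree_sum_le_of_forall_le _ _ fun _ hk =>
    (natDegree_monomial_le _).trans (Nat.lt_succ_iff.1 (mem_range.1 hk))

theorem coeff_padePoly_of_lt (hk : n < k) : (padePoly ν n).coeff k = 0 :=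
  coeff_eq_zero_of_natDegree_lt (natDegree_padePoly_le.trans_lt hk)

theorem eval_padePoly (ν s : ℝ) (n : ℕ) :
    (padePoly ν n).eval s = ∑ k ∈ range (n + 1), (padePoly ν n).coeff k * s ^ k :=
  eval_eq_sum_range' (Nat.lt_succ_iff.2 natDegree_padePoly_le) s

theorem eval_one_padePoly (ν : ℝ) (n : ℕ) : (padePoly ν n).eval 1 = n.centralBinom := by
  have hVandermonde := Ring.add_choose_eq n (Commute.all ((n : ℝ) + ν) (n - ν))
  rw [show (n : ℝ) + ν + (n - ν) = (2 * n : ℕ) by push_cast; ring, Ring.choose_natCast,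
    Finset.Nat.sum_antidiagonal_eq_sum_range_succ
      (fun i j => Ring.choose ((n : ℝ) + ν) i * Ring.choose ((n : ℝ) - ν) j)] at hVandermonde
  rw [Nat.centralBinom, hVandermonde]
  simp [padePoly, eval_finsetSum]

theorem coeff_padePoly_pos (hν : |ν| < 1) (hk : k ≤ n) : 0 < (padePoly ν n).coeff k := by
  have hkn : (k : ℝ) ≤ n := mod_cast hk
  have hnk : ((n - k : ℕ) : ℝ) ≤ n := mod_cast Nat.sub_le n k
  obtain ⟨hlower, hupper⟩ := abs_lt.1 hν
  rw [coeff_padePoly hk]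
  exact mul_pos (ring_choose_pos (by linarith)) (ring_choose_pos (by linarith))

theorem coeff_padePoly_nonneg (hν : |ν| < 1) (k : ℕ) : 0 ≤ (padePoly ν n).coeff k :=
  (le_or_gt k n).elim (fun hk => (coeff_padePoly_pos hν hk).le) fun hk =>
    (coeff_padePoly_of_lt hk).ge

theorem eval_padePoly_pos (hν : |ν| < 1) (hs : 0 < s) : 0 < (padePoly ν n).eval s := by
  rw [eval_padePoly]
  exact sum_pos (fun k hk => mul_pos (coeff_padePoly_pos hν (Nat.lt_succ_iff.1 (mem_range.1 hk)))
    (pow_pos hs k)) nonempty_range_add_one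

theorem coeff_zero_padePoly_mul_le_one (hν : |ν| < 1) :
    (padePoly ν n).coeff 0 * (padePoly (-ν) n).coeff 0 ≤ 1 := by
  have hfactorial : ∏ j ∈ range n, ((n : ℝ) - j) = n ! := by
    rw [← div_eq_one_iff_eq (by positivity), ← ring_choose_eq_prod_div_factorial,
      Ring.choose_natCast, Nat.choose_self, Nat.cast_one]
  simp only [coeff_padePoly n.zero_le, Ring.choose_zero_right, one_mul, Nat.sub_zero,
    ring_choose_eq_prod_div_factorial, div_mul_div_comm, ← prod_mul_distrib]
  rw [div_le_one (by positivity), ← hfactorial, ← prod_mul_distrib]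
  have hfactor : ∀ j ∈ range n, 1 ≤ (n : ℝ) - j := fun j hj => by
    have : (j : ℝ) + 1 ≤ n := mod_cast mem_range.1 hj
    linarith
  obtain ⟨hlower, hupper⟩ := abs_lt.1 hν
  refine prod_le_prod (fun j hj => ?_) fun j _ => by linarith [sq_nonneg ν]
  exact mul_nonneg (by linarith [hfactor j hj]) (by linarith [hfactor j hj])

theorem succ_mul_coeff_padePoly_succ (ν : ℝ) (n k : ℕ) :
    (k + 1) * (k + 1 - ν) * (padePoly ν n).coeff (k + 1) =
      (n - k) * (n + ν - k) * (padePoly ν n).coeff k := by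
  rcases lt_trichotomy k n with hk | rfl | hk
  · obtain ⟨l, rfl⟩ := Nat.exists_eq_add_of_lt hk
    have hleft := succ_mul_ring_choose_succ ((k + l + 1 : ℕ) + ν) k
    have hright := succ_mul_ring_choose_succ ((k + l + 1 : ℕ) - ν) l
    rw [coeff_padePoly hk, coeff_padePoly hk.le, Nat.add_sub_add_right, Nat.add_sub_cancel_left,
      add_assoc k l 1, Nat.add_sub_cancel_left, ← add_assoc k l 1]
    generalize Ring.choose (((k + l + 1 : ℕ) : ℝ) + ν) k = a at *
    generalize Ring.choose (((k + l + 1 : ℕ) : ℝ) - ν) l = b at *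
    push_cast at hleft hright ⊢
    linear_combination (k + 1 - ν) * b * hleft - (k + l + 1 + ν - k) * a * hright
  · simp [coeff_padePoly_of_lt]
  · simp [coeff_padePoly_of_lt hk, coeff_padePoly_of_lt (hk.trans k.lt_succ_self)]

theorem coeff_X_mul_derivative (F : ℝ[X]) (k : ℕ) :
    (X * derivative F).coeff k = k * F.coeff k := by
  cases k with
  | zero => simp
  | succ k => rw [coeff_X_mul, coeff_derivative]; push_cast; ring

theorem hypergeometric_padePoly (ν : ℝ) (n : ℕ) :
    (1 - X) * (X * derivative (X * derivative (padePoly ν n)) -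
        C ν * (X * derivative (padePoly ν n))) =
      X * (C (n * (n + ν)) * padePoly ν n - C (2 * n : ℝ) * (X * derivative (padePoly ν n))) := by
  ext k
  cases k with
  | zero => simp [sub_mul]
  | succ k =>
    have hrec := succ_mul_coeff_padePoly_succ ν n k
    rw [sub_mul, one_mul, coeff_sub, coeff_X_mul, coeff_X_mul]
    simp only [coeff_sub, coeff_C_mul, coeff_X_mul_derivative]
    push_cast
    linear_combination hrec

theorem succ_mul_coeff_succ_of_one_sub_X_mul_derivative {F : ℝ[X]} {N : ℕ}
    (hF : (1 - X) * derivative F = -(C (N : ℝ) * F)) (k : ℕ) :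
    (k + 1) * F.coeff (k + 1) = (k - N) * F.coeff k := by
  have hcoeff := congrArg (coeff · k) hF
  simp only [sub_mul, one_mul, coeff_sub, coeff_neg, coeff_C_mul, coeff_derivative,
    coeff_X_mul_derivative] at hcoeff
  linear_combination hcoeff

theorem eq_C_mul_one_sub_X_pow {F : ℝ[X]} {N : ℕ}
    (hF : (1 - X) * derivative F = -(C (N : ℝ) * F)) : F = C (F.coeff 0) * (1 - X) ^ N := by
  have hpow : (1 - X) * derivative ((1 - X : ℝ[X]) ^ N) = -(C (N : ℝ) * (1 - X) ^ N) := by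
    cases N with
    | zero => simp
    | succ N => simp [derivative_pow]; ring
  ext k
  rw [coeff_C_mul]
  induction k with
  | zero => simp [coeff_zero_eq_eval_zero]
  | succ k ih =>
    refine mul_left_cancel₀ (Nat.cast_add_one_ne_zero k : (k + 1 : ℝ) ≠ 0) ?_
    rw [succ_mul_coeff_succ_of_one_sub_X_mul_derivative hF, ih]
    linear_combination
      -F.coeff 0 * succ_mul_coeff_succ_of_one_sub_X_mul_derivative hpow k

theorem wronskian_padePoly (ν : ℝ) (n : ℕ) :
    X * derivative (padePoly ν n) * padePoly (-ν) n -
        padePoly ν n * (X * derivative (padePoly (-ν) n)) - C ν * padePoly ν n * padePoly (-ν) n =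
      C (-ν * ((padePoly ν n).coeff 0 * (padePoly (-ν) n).coeff 0)) * (1 - X) ^ (2 * n) := by
  have hP := hypergeometric_padePoly ν n
  have hQ := hypergeometric_padePoly (-ν) n
  generalize padePoly ν n = P at *
  generalize padePoly (-ν) n = Q at *
  have hcoeff : (X * derivative P * Q - P * (X * derivative Q) - C ν * P * Q).coeff 0 =
      -ν * (P.coeff 0 * Q.coeff 0) := by
    simp [mul_coeff_zero, mul_assoc]
  rw [← hcoeff]
  refine eq_C_mul_one_sub_X_pow (mul_left_cancel₀ X_ne_zero ?_)
  simp only [derivative_sub, derivative_mul, derivative_C, derivative_X, map_neg, map_mul, map_add,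
    map_natCast, map_ofNat] at hP hQ ⊢
  push_cast
  linear_combination Q * hP - P * hQ

theorem eval_one_derivative_padePoly (ν : ℝ) (hn : n ≠ 0) :
    (derivative (padePoly ν n)).eval 1 = (n + ν) / 2 * n.centralBinom := by
  have heval := congrArg (eval 1) (hypergeometric_padePoly ν n)
  simp only [eval_mul, eval_sub, eval_X, eval_one, eval_C, eval_one_padePoly, sub_self, zero_mul,
    one_mul] at heval
  refine mul_left_cancel₀ (Nat.cast_ne_zero.2 hn : (n : ℝ) ≠ 0) ?_
  linear_combination heval / 2

/- Tangent-line inequality: `s ^ k ≥ s ^ a * (1 + (k - a) * log s)`, whose `log s` terms cancel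
after summation. -/
theorem eval_one_mul_rpow_le_eval {F : ℝ[X]} (hF : ∀ k, 0 ≤ F.coeff k) {a : ℝ}
    (ha : (derivative F).eval 1 = a * F.eval 1) (hs : 0 < s) : F.eval 1 * s ^ a ≤ F.eval s := by
  have htangent : ∀ k : ℕ, s ^ a * (1 + (k - a) * Real.log s) ≤ s ^ k := fun k =>
    calc s ^ a * (1 + (k - a) * Real.log s) ≤ s ^ a * s ^ (k - a) := by
          rw [Real.rpow_def_of_pos hs (k - a), mul_comm (Real.log s), add_comm]
          exact mul_le_mul_of_nonneg_left (Real.add_one_le_exp _) (by positivity)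
      _ = s ^ k := by rw [← Real.rpow_add hs, add_sub_cancel, Real.rpow_natCast]
  have hderiv : (derivative F).eval 1 = ∑ k ∈ range (F.natDegree + 1), F.coeff k * k := by
    rw [derivative_eval, sum_over_range _ (by simp)]
    simp
  have hone : F.eval 1 = ∑ k ∈ range (F.natDegree + 1), F.coeff k := by
    simp [eval_eq_sum_range]
  calc F.eval 1 * s ^ a
      = s ^ a * (F.eval 1 + ((derivative F).eval 1 - a * F.eval 1) * Real.log s) := by
        rw [ha]; ring
    _ = ∑ k ∈ range (F.natDegree + 1), F.coeff k * (s ^ a * (1 + (k - a) * Real.log s)) := by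
        rw [hderiv, hone, mul_sum, ← sum_sub_distrib, sum_mul, ← sum_add_distrib, mul_sum]
        exact sum_congr rfl fun k _ => by ring
    _ ≤ ∑ k ∈ range (F.natDegree + 1), F.coeff k * s ^ k :=
        sum_le_sum fun k _ => mul_le_mul_of_nonneg_left (htangent k) (hF k)
    _ = F.eval s := (eval_eq_sum_range s).symm

theorem centralBinom_mul_rpow_le_eval_padePoly (hν : |ν| < 1) (hn : n ≠ 0) (hs : 0 < s) :
    n.centralBinom * s ^ ((n + ν) / 2) ≤ (padePoly ν n).eval s := by
  rw [← eval_one_padePoly ν n]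
  refine eval_one_mul_rpow_le_eval (coeff_padePoly_nonneg hν) ?_ hs
  rw [eval_one_derivative_padePoly ν hn, eval_one_padePoly]

/-- The quotient of the Padé approximant `padePoly ν n / padePoly (-ν) n` by `s ^ ν`. -/
noncomputable def padeRatio (ν : ℝ) (n : ℕ) (s : ℝ) : ℝ :=
  (padePoly ν n).eval s / (s ^ ν * (padePoly (-ν) n).eval s)

theorem hasDerivAt_padeRatio (hν : |ν| < 1) (hs : 0 < s) :
    HasDerivAt (padeRatio ν n)
      (-(ν * ((padePoly ν n).coeff 0 * (padePoly (-ν) n).coeff 0) * (s - 1) ^ (2 * n) /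
        (s ^ (ν + 1) * (padePoly (-ν) n).eval s ^ 2))) s := by
  have hQ : 0 < (padePoly (-ν) n).eval s := eval_padePoly_pos (by rwa [abs_neg]) hs
  have hW := congrArg (eval s) (wronskian_padePoly ν n)
  simp only [eval_mul, eval_sub, eval_X, eval_one, eval_pow, eval_C] at hW
  rw [← neg_sub s 1, Even.neg_pow (even_two_mul n)] at hW
  refine (((padePoly ν n).hasDerivAt s).div ((Real.hasDerivAt_rpow_const (Or.inl hs.ne')).mul
    ((padePoly (-ν) n).hasDerivAt s)) (mul_pos (Real.rpow_pos_of_pos hs ν) hQ).ne').congr_deriv ?_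
  rw [Real.rpow_add_one hs.ne', Real.rpow_sub_one hs.ne']
  simp only [Pi.mul_apply]
  field_simp
  linear_combination hW

theorem padeRatio_one (ν : ℝ) (n : ℕ) : padeRatio ν n 1 = 1 := by
  have hT : (n.centralBinom : ℝ) ≠ 0 := Nat.cast_ne_zero.2 n.centralBinom_ne_zero
  rw [padeRatio, eval_one_padePoly, eval_one_padePoly, Real.one_rpow, one_mul, div_self hT]

theorem deriv_padeRatio_neg (hν₀ : 0 < ν) (hν₁ : ν < 1) (hs : 1 < s) :
    deriv (padeRatio ν n) s < 0 := by
  have hs₀ : 0 < s := by linarith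
  have : 0 < s - 1 := sub_pos.2 hs
  have hν : |ν| < 1 := abs_lt.2 ⟨by linarith, hν₁⟩
  have hν' : |-ν| < 1 := by rwa [abs_neg]
  have hP₀ := coeff_padePoly_pos hν n.zero_le
  have hQ₀ := coeff_padePoly_pos hν' n.zero_le
  have hQ := eval_padePoly_pos (n := n) hν' hs₀
  rw [(hasDerivAt_padeRatio hν hs₀).deriv, neg_lt_zero]
  positivity

theorem neg_deriv_padeRatio_le (hν₀ : 0 < ν) (hν₁ : ν < 1) (hn : n ≠ 0) (hs : 1 ≤ s) :
    -deriv (padeRatio ν n) s ≤ ν * ((s - 1) ^ 2 / s) ^ n / n.centralBinom ^ 2 := by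
  have hs₀ : 0 < s := by linarith
  have hν : |ν| < 1 := abs_lt.2 ⟨by linarith, hν₁⟩
  have hT : (0 : ℝ) < n.centralBinom := mod_cast n.centralBinom_pos
  have hQ := centralBinom_mul_rpow_le_eval_padePoly (ν := -ν) (by rwa [abs_neg]) hn hs₀
  have hdenom : s ^ n * n.centralBinom ^ 2 ≤ s ^ (ν + 1) * (padePoly (-ν) n).eval s ^ 2 :=
    calc s ^ n * n.centralBinom ^ 2 ≤ s * (s ^ n * n.centralBinom ^ 2) :=
          le_mul_of_one_le_left (by positivity) hs
      _ = s ^ (ν + 1) * (n.centralBinom * s ^ ((n + -ν) / 2)) ^ 2 := by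
          have hpow : s ^ (ν + 1) * (s ^ ((n + -ν) / 2)) ^ 2 = s ^ n * s := by
            rw [← Real.rpow_natCast (s ^ _), ← Real.rpow_mul hs₀.le, ← Real.rpow_add hs₀,
              ← Real.rpow_natCast s n, ← Real.rpow_add_one hs₀.ne']
            congr 1
            push_cast
            ring
          linear_combination -(n.centralBinom : ℝ) ^ 2 * hpow
      _ ≤ s ^ (ν + 1) * (padePoly (-ν) n).eval s ^ 2 := by gcongr
  rw [(hasDerivAt_padeRatio hν hs₀).deriv, neg_neg, div_pow, ← pow_mul, mul_div_assoc', div_div]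
  gcongr
  exact mul_le_of_le_one_right hν₀.le (coeff_zero_padePoly_mul_le_one hν)

theorem one_sub_padeRatio_mem_Ioc (hν₀ : 0 < ν) (hν₁ : ν < 1) (hn : n ≠ 0) (hs : 1 < s) :
    1 - padeRatio ν n s ∈
      Set.Ioc 0 (ν * (s - 1) * ((s - 1) ^ 2 / s) ^ n / n.centralBinom ^ 2) := by
  have hν : |ν| < 1 := abs_lt.2 ⟨by linarith, hν₁⟩
  have hderiv : ∀ t, 1 ≤ t → HasDerivAt (padeRatio ν n) (deriv (padeRatio ν n) t) t := fun t ht =>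
    (hasDerivAt_padeRatio hν (by linarith)).differentiableAt.hasDerivAt
  obtain ⟨ξ, ⟨hξ, hξs⟩, hslope⟩ := exists_hasDerivAt_eq_slope (padeRatio ν n) _ hs
    (fun t ht => (hderiv t ht.1).continuousAt.continuousWithinAt) (fun t ht => hderiv t ht.1.le)
  have hs₁ : 0 < s - 1 := sub_pos.2 hs
  have hξ₁ : 0 < ξ - 1 := sub_pos.2 hξ
  have hξ₀ : 0 < ξ := by linarith
  rw [padeRatio_one, eq_div_iff hs₁.ne'] at hslope
  rw [← neg_sub (padeRatio ν n s), ← hslope, ← neg_mul]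
  constructor
  · exact mul_pos (neg_pos.2 (deriv_padeRatio_neg hν₀ hν₁ hξ)) hs₁
  · calc -deriv (padeRatio ν n) ξ * (s - 1)
        ≤ ν * ((ξ - 1) ^ 2 / ξ) ^ n / n.centralBinom ^ 2 * (s - 1) :=
          mul_le_mul_of_nonneg_right (neg_deriv_padeRatio_le hν₀ hν₁ hn hξ.le) hs₁.le
      _ ≤ ν * ((s - 1) ^ 2 / s) ^ n / n.centralBinom ^ 2 * (s - 1) := by
          have hmono : (ξ - 1) ^ 2 / ξ ≤ (s - 1) ^ 2 / s := by
            rw [div_le_div_iff₀ hξ₀ (by linarith)]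
            have hξs₁ : 1 < ξ * s := one_lt_mul hξ.le hs
            linarith [mul_pos (sub_pos.2 hξs) (sub_pos.2 hξs₁)]
          gcongr
      _ = _ := by ring

theorem padeRatio_third_cube_mul (hs : 0 < s) :
    padeRatio (1 / 3) n s ^ 3 * (s * (padePoly (-(1 / 3)) n).eval s ^ 3) =
      (padePoly (1 / 3) n).eval s ^ 3 := by
  have hQ : 0 < (padePoly (-(1 / 3)) n).eval s := eval_padePoly_pos (by norm_num [abs_lt]) hs
  have hroot : (s ^ (1 / 3 : ℝ)) ^ 3 = s := by
    rw [← Real.rpow_natCast, ← Real.rpow_mul hs.le]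
    norm_num
  rw [padeRatio, div_pow, mul_pow, hroot, div_mul_cancel₀ _ (by positivity)]

theorem padePoly_third_cube_lt (hn : n ≠ 0) (hs : 1 < s) :
    (padePoly (1 / 3) n).eval s ^ 3 < s * (padePoly (-(1 / 3)) n).eval s ^ 3 := by
  have hs₀ : 0 < s := by linarith
  have hQ : 0 < (padePoly (-(1 / 3)) n).eval s := eval_padePoly_pos (by norm_num [abs_lt]) hs₀
  have hratio : 0 < 1 - padeRatio (1 / 3) n s :=
    (one_sub_padeRatio_mem_Ioc (by norm_num) (by norm_num) hn hs).1
  rw [← padeRatio_third_cube_mul hs₀]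
  exact mul_lt_of_lt_one_left (by positivity)
    ((Odd.strictMono_pow (by decide) (sub_pos.1 hratio)).trans_eq (one_pow 3))

theorem sub_padePoly_third_cube_le (hn : n ≠ 0) (hs : 1 < s) :
    s * (padePoly (-(1 / 3)) n).eval s ^ 3 - (padePoly (1 / 3) n).eval s ^ 3 ≤
      (s - 1) * ((s - 1) ^ 2 / s) ^ n / n.centralBinom ^ 2 *
        (s * (padePoly (-(1 / 3)) n).eval s ^ 3) := by
  have hs₀ : 0 < s := by linarith
  have hP : 0 < (padePoly (1 / 3) n).eval s := eval_padePoly_pos (by norm_num [abs_lt]) hs₀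
  have hQ : 0 < (padePoly (-(1 / 3)) n).eval s := eval_padePoly_pos (by norm_num [abs_lt]) hs₀
  have hratio := (one_sub_padeRatio_mem_Ioc (ν := 1 / 3) (by norm_num) (by norm_num) hn hs).2
  have hratio_pos : 0 < padeRatio (1 / 3) n s := div_pos hP (by positivity)
  rw [← padeRatio_third_cube_mul hs₀, ← one_sub_mul]
  gcongr
  generalize padeRatio (1 / 3) n s = u at *
  calc 1 - u ^ 3 = 3 * (1 - u) - (1 - u) ^ 2 * (u + 2) := by ring
    _ ≤ 3 * (1 - u) := sub_le_self _ (by positivity)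
    _ ≤ 3 * (1 / 3 * (s - 1) * ((s - 1) ^ 2 / s) ^ n / n.centralBinom ^ 2) := by gcongr
    _ = (s - 1) * ((s - 1) ^ 2 / s) ^ n / n.centralBinom ^ 2 := by ring

theorem coeff_padePoly_neg_le (hν₀ : 0 ≤ ν) (hν₁ : ν < 1) (hk : k ≤ n) :
    (padePoly (-ν) n).coeff k ≤ (n + 1) * n.choose k ^ 2 := by
  have hkn : (k : ℝ) ≤ n := mod_cast hk
  have hnk : ((n - k : ℕ) : ℝ) ≤ n := mod_cast Nat.sub_le n k
  have hleft : Ring.choose (n + -ν) k ≤ n.choose k := by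
    rw [← Ring.choose_natCast]
    exact ring_choose_le_ring_choose (by linarith) (by linarith)
  have hright : Ring.choose (n - -ν) (n - k) ≤ (n + 1) * n.choose k := by
    have hsucc : (n + 1).choose (n - k) ≤ (n + 1) * n.choose k := by
      rw [← Nat.choose_symm_of_eq_add (show n + 1 = k + 1 + (n - k) by lia),
        Nat.add_one_mul_choose_eq n k]
      exact Nat.le_mul_of_pos_right _ k.succ_pos
    calc Ring.choose (n - -ν) (n - k) ≤ Ring.choose ((n + 1 : ℕ) : ℝ) (n - k) :=
          ring_choose_le_ring_choose (by linarith) (by push_cast; linarith)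
      _ ≤ (n + 1) * n.choose k := by rw [Ring.choose_natCast]; exact_mod_cast hsucc
  rw [coeff_padePoly hk]
  calc Ring.choose (n + -ν) k * Ring.choose (n - -ν) (n - k)
      ≤ n.choose k * ((n + 1) * n.choose k) :=
        mul_le_mul hleft hright (ring_choose_pos (by linarith)).le (by positivity)
    _ = (n + 1) * n.choose k ^ 2 := by ring

theorem eval_padePoly_neg_le (hν₀ : 0 ≤ ν) (hν₁ : ν < 1) (hs : 0 ≤ s) :
    (padePoly (-ν) n).eval s ≤ (n + 1) * (1 + √s) ^ (2 * n) := by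
  have hcoeff : ∀ k ∈ range (n + 1),
      (padePoly (-ν) n).coeff k * s ^ k ≤ (n + 1) * (√s ^ k * n.choose k) ^ 2 := fun k hk => by
    rw [mul_pow, ← pow_mul, mul_comm k, pow_mul, Real.sq_sqrt hs, mul_left_comm, mul_comm]
    gcongr
    exact coeff_padePoly_neg_le hν₀ hν₁ (Nat.lt_succ_iff.1 (mem_range.1 hk))
  calc (padePoly (-ν) n).eval s
      ≤ ∑ k ∈ range (n + 1), (n + 1) * (√s ^ k * n.choose k) ^ 2 :=
        (eval_padePoly (-ν) s n).trans_le (sum_le_sum hcoeff)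
    _ ≤ (n + 1) * (∑ k ∈ range (n + 1), √s ^ k * n.choose k) ^ 2 := by
        rw [← mul_sum]
        gcongr
        exact sum_sq_le_sq_sum_of_nonneg fun k _ => by positivity
    _ = (n + 1) * (1 + √s) ^ (2 * n) := by
        rw [mul_comm 2, pow_mul, add_comm 1 (√s), add_pow]
        simp

end Pade

/-! ### An effective irrationality measure for `∛9` -/

section Measure

open Finset Polynomial
open scoped Nat

theorem ring_choose_add_third (ε : ℤ) (n k : ℕ) :
    Ring.choose (n + ε / 3 : ℝ) k = thirdsDescFactorial ε n k / (3 ^ k * k !) := by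
  have hprod : ∏ j ∈ range k, ((n + ε / 3 : ℝ) - j) = thirdsDescFactorial ε n k / 3 ^ k := by
    rw [thirdsDescFactorial, Int.cast_prod, ← card_range k, ← prod_const, card_range,
      ← prod_div_distrib]
    exact prod_congr rfl fun j _ => by push_cast; ring
  rw [ring_choose_eq_prod_div_factorial, hprod, div_div]

/-- A rational number whose product with `padePoly (± 1 / 3) (4 * m)` has integer coefficients. The
factor `3 ^ (6 * m)` clears the denominators; the quotient of factorials removes most of the common
divisor that remains, and it is what makes the final estimate strong enough. -/
noncomputable def padeDenominator (m : ℕ) : ℝ :=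
  3 ^ (6 * m) * ((4 * m)! * (3 * m)!) / ((6 * m)! * m !)

theorem padeDenominator_mul_ring_choose_mem_range {m k l : ℕ} (hkl : k + l = 4 * m) :
    padeDenominator m * (Ring.choose ((4 * m : ℕ) + 1 / 3 : ℝ) k *
      Ring.choose ((4 * m : ℕ) - 1 / 3 : ℝ) l) ∈ (Int.castRingHom ℝ).range := by
  obtain ⟨e, he⟩ := factorial_mul_dvd_thirdsDescFactorial hkl
  have hleft := ring_choose_add_third 1 (4 * m) k
  have hright := ring_choose_add_third (-1) (4 * m) l
  rw [Int.cast_one] at hleft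
  rw [Int.cast_neg, Int.cast_one, neg_div, ← sub_eq_add_neg] at hright
  have he' : (3 : ℝ) ^ (2 * m) * ((4 * m)! * (3 * m)!) *
      (thirdsDescFactorial 1 (4 * m) k * thirdsDescFactorial (-1) (4 * m) l) =
        (6 * m)! * m ! * (k ! * l !) * e := mod_cast he
  have hpow : (3 : ℝ) ^ (6 * m) = 3 ^ (2 * m) * (3 ^ k * 3 ^ l) := by
    rw [← pow_add, ← pow_add, hkl]
    congr 1
    ring
  refine ⟨e, ?_⟩
  rw [hleft, hright, padeDenominator, hpow, Int.coe_castRingHom]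
  field_simp
  linear_combination -he'

theorem padeDenominator_mul_coeff_mem_range (m k : ℕ) :
    padeDenominator m * (padePoly (1 / 3) (4 * m)).coeff k ∈ (Int.castRingHom ℝ).range := by
  rcases le_or_gt k (4 * m) with hk | hk
  · rw [coeff_padePoly hk]
    exact padeDenominator_mul_ring_choose_mem_range (Nat.add_sub_cancel' hk)
  · simp only [coeff_padePoly_of_lt hk, mul_zero, zero_mem]

theorem padeDenominator_mul_coeff_neg_mem_range (m k : ℕ) :
    padeDenominator m * (padePoly (-(1 / 3)) (4 * m)).coeff k ∈ (Int.castRingHom ℝ).range := by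
  rcases le_or_gt k (4 * m) with hk | hk
  · rw [coeff_padePoly hk, ← sub_eq_add_neg, sub_neg_eq_add, mul_comm (Ring.choose _ _)]
    exact padeDenominator_mul_ring_choose_mem_range (Nat.sub_add_cancel hk)
  · simp only [coeff_padePoly_of_lt hk, mul_zero, zero_mem]

theorem mul_pow_mul_eval_div_mem_range {F : ℝ[X]} {D : ℝ} {n : ℕ} (hdeg : F.natDegree ≤ n)
    (hF : ∀ k, D * F.coeff k ∈ (Int.castRingHom ℝ).range) (a : ℤ) {b : ℤ} (hb : b ≠ 0) :
    D * b ^ n * F.eval (a / b : ℝ) ∈ (Int.castRingHom ℝ).range := by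
  rw [eval_eq_sum_range' (Nat.lt_succ_iff.2 hdeg), mul_sum]
  refine sum_mem fun k hk => ?_
  have hterm : D * b ^ n * (F.coeff k * (a / b : ℝ) ^ k) =
      D * F.coeff k * ((a ^ k * b ^ (n - k) : ℤ) : ℝ) := by
    have : (b : ℝ) ≠ 0 := Int.cast_ne_zero.2 hb
    rw [← Nat.sub_add_cancel (Nat.lt_succ_iff.1 (mem_range.1 hk)), pow_add, Nat.add_sub_cancel,
      div_pow]
    push_cast
    field_simp
  rw [hterm]
  exact mul_mem (hF k) ⟨_, rfl⟩

theorem choose_four_mul_le (m : ℕ) : (4 * m).choose m * 27 ^ m ≤ 256 ^ m := by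
  calc (4 * m).choose m * 27 ^ m = 1 ^ m * 3 ^ (4 * m - m) * (4 * m).choose m := by
        rw [show 4 * m - m = 3 * m by lia, pow_mul, one_pow, one_mul, mul_comm]
        norm_num
    _ ≤ ∑ k ∈ range (4 * m + 1), 1 ^ k * 3 ^ (4 * m - k) * (4 * m).choose k :=
        single_le_sum (f := fun k => 1 ^ k * 3 ^ (4 * m - k) * (4 * m).choose k)
          (fun _ _ => Nat.zero_le _) (mem_range.2 (by lia))
    _ = (1 + 3) ^ (4 * m) := (add_pow 1 3 (4 * m)).symm
    _ = 256 ^ m := by rw [pow_mul]; norm_num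

theorem padeDenominator_eq_choose_div (m : ℕ) :
    padeDenominator m = 3 ^ (6 * m) * (4 * m).choose m / (3 * m).centralBinom := by
  have hfour : ((4 * m).choose m * m ! * (3 * m)! : ℝ) = (4 * m)! := by
    have := Nat.choose_mul_factorial_mul_factorial (show m ≤ 4 * m by lia)
    rw [show 4 * m - m = 3 * m by lia] at this
    exact_mod_cast this
  have hsix : ((3 * m).centralBinom * (3 * m)! * (3 * m)! : ℝ) = (6 * m)! := by
    have := Nat.choose_mul_factorial_mul_factorial (show 3 * m ≤ 2 * (3 * m) by lia)
    rw [show 2 * (3 * m) - 3 * m = 3 * m by lia] at this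
    rw [show 6 * m = 2 * (3 * m) by ring]
    exact_mod_cast this
  have hcentral : ((3 * m).centralBinom : ℝ) ≠ 0 := Nat.cast_ne_zero.2 (Nat.centralBinom_ne_zero _)
  rw [padeDenominator, ← hfour, ← hsix]
  field_simp

theorem padeDenominator_le {m : ℕ} (hm : 0 < m) : padeDenominator m ≤ 6 * m * 108 ^ m := by
  have hchoose : ((4 * m).choose m * 27 ^ m : ℝ) ≤ 256 ^ m := mod_cast choose_four_mul_le m
  have hcentral : (64 : ℝ) ^ m ≤ 6 * m * (3 * m).centralBinom := by
    have hfour : (4 : ℝ) ^ (3 * m) ≤ 2 * (3 * m) * (3 * m).centralBinom := mod_cast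
      Nat.four_pow_le_two_mul_self_mul_centralBinom (3 * m) (by lia)
    rw [pow_mul] at hfour
    norm_num at hfour
    linarith
  have hcentral_pos : (0 : ℝ) < (3 * m).centralBinom := mod_cast Nat.centralBinom_pos _
  rw [padeDenominator_eq_choose_div, div_le_iff₀ hcentral_pos]
  calc (3 : ℝ) ^ (6 * m) * (4 * m).choose m = 27 ^ m * ((4 * m).choose m * 27 ^ m) := by
        rw [show 6 * m = 3 * m + 3 * m by ring, pow_add, pow_mul]
        ring
    _ ≤ 27 ^ m * 256 ^ m := by gcongr
    _ = 108 ^ m * 64 ^ m := by rw [← mul_pow, ← mul_pow]; norm_num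
    _ ≤ 108 ^ m * (6 * m * (3 * m).centralBinom) := by gcongr
    _ = 6 * m * 108 ^ m * (3 * m).centralBinom := by ring

theorem eight_pow_mul_eval_padePoly_le (m : ℕ) :
    8 ^ (4 * m) * (padePoly (-(1 / 3)) (4 * m)).eval (9 / 8) ≤ (4 * m + 1) * 1331714 ^ m := by
  have hroot : (8 * (1 + √(9 / 8)) ^ 2) ^ 4 ≤ (1331714 : ℝ) := by
    have hsq : √(9 / 8 : ℝ) ^ 2 = 9 / 8 := Real.sq_sqrt (by norm_num)
    have hle : √(9 / 8 : ℝ) ≤ 665857 / 627776 := Real.sqrt_le_iff.2 (by norm_num)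
    have hexpand : (8 * (1 + √(9 / 8)) ^ 2) ^ 4 = 665857 + 627776 * √(9 / 8 : ℝ) := by
      rw [show 8 * (1 + √(9 / 8 : ℝ)) ^ 2 = 17 + 16 * √(9 / 8) by linear_combination 8 * hsq,
        show (17 + 16 * √(9 / 8 : ℝ)) ^ 4 = ((17 + 16 * √(9 / 8)) ^ 2) ^ 2 by ring,
        show (17 + 16 * √(9 / 8 : ℝ)) ^ 2 = 577 + 544 * √(9 / 8) by linear_combination 256 * hsq]
      linear_combination 295936 * hsq
    linarith
  have hle := eval_padePoly_neg_le (ν := 1 / 3) (s := 9 / 8) (n := 4 * m) (by norm_num)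
    (by norm_num) (by norm_num)
  calc 8 ^ (4 * m) * (padePoly (-(1 / 3)) (4 * m)).eval (9 / 8)
      ≤ 8 ^ (4 * m) * (((4 * m : ℕ) + 1) * (1 + √(9 / 8)) ^ (2 * (4 * m))) := by gcongr
    _ = (4 * m + 1) * ((8 * (1 + √(9 / 8)) ^ 2) ^ 4) ^ m := by
        rw [← pow_mul, mul_pow, ← pow_mul]
        push_cast
        ring
    _ ≤ (4 * m + 1) * 1331714 ^ m := by gcongr

variable {m : ℕ}

theorem exists_int_eq_padePoly (m : ℕ) : ∃ A B : ℤ,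
    (A : ℝ) = 2 * (padeDenominator m * 8 ^ (4 * m) * (padePoly (1 / 3) (4 * m)).eval (9 / 8)) ∧
    (B : ℝ) = padeDenominator m * 8 ^ (4 * m) * (padePoly (-(1 / 3)) (4 * m)).eval (9 / 8) := by
  obtain ⟨a, ha⟩ := mul_pow_mul_eval_div_mem_range natDegree_padePoly_le
    (padeDenominator_mul_coeff_mem_range m) 9 (b := 8) (by norm_num)
  obtain ⟨b, hb⟩ := mul_pow_mul_eval_div_mem_range natDegree_padePoly_le
    (padeDenominator_mul_coeff_neg_mem_range m) 9 (b := 8) (by norm_num)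
  refine ⟨2 * a, b, ?_, ?_⟩
  · simpa using ha
  · simpa using hb

theorem sixteen_pow_le (hm : 0 < m) :
    (16 : ℝ) ^ (4 * m) ≤ 64 * m ^ 2 * (4 * m).centralBinom ^ 2 := by
  have hfour : (4 : ℝ) ^ (4 * m) ≤ 2 * (4 * m) * (4 * m).centralBinom := mod_cast
    Nat.four_pow_le_two_mul_self_mul_centralBinom (4 * m) (by lia)
  calc (16 : ℝ) ^ (4 * m) = (4 ^ (4 * m)) ^ 2 := by rw [pow_right_comm]; norm_num
    _ ≤ (2 * (4 * m) * (4 * m).centralBinom) ^ 2 := by gcongr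
    _ = 64 * m ^ 2 * (4 * m).centralBinom ^ 2 := by ring

theorem padePoly_third_cube_error_le (hm : 0 < m) :
    (9 * (padePoly (-(1 / 3)) (4 * m)).eval (9 / 8) ^ 3 -
        8 * (padePoly (1 / 3) (4 * m)).eval (9 / 8) ^ 3) * 1152 ^ (4 * m) ≤
      72 * m ^ 2 * (padePoly (-(1 / 3)) (4 * m)).eval (9 / 8) ^ 3 := by
  have hq : 0 < (padePoly (-(1 / 3)) (4 * m)).eval (9 / 8) :=
    eval_padePoly_pos (by norm_num [abs_lt]) (by norm_num)
  have herror := sub_padePoly_third_cube_le (n := 4 * m) (s := 9 / 8) (by lia) (by norm_num)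
  rw [show ((9 / 8 : ℝ) - 1) ^ 2 / (9 / 8) = 1 / 72 by norm_num] at herror
  have hsixteen := sixteen_pow_le hm
  have hT : (0 : ℝ) < (4 * m).centralBinom := mod_cast Nat.centralBinom_pos _
  generalize (padePoly (-(1 / 3)) (4 * m)).eval (9 / 8) = q at *
  generalize (padePoly (1 / 3) (4 * m)).eval (9 / 8) = p at *
  generalize ((4 * m).centralBinom : ℝ) = T at *
  calc (9 * q ^ 3 - 8 * p ^ 3) * 1152 ^ (4 * m)
      = 8 * (9 / 8 * q ^ 3 - p ^ 3) * 72 ^ (4 * m) * 16 ^ (4 * m) := by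
        rw [mul_assoc _ (72 ^ (4 * m) : ℝ), ← mul_pow]
        ring_nf
    _ ≤ 8 * ((9 / 8 - 1) * (1 / 72) ^ (4 * m) / T ^ 2 * (9 / 8 * q ^ 3)) * 72 ^ (4 * m) *
          16 ^ (4 * m) := by gcongr
    _ ≤ 8 * ((9 / 8 - 1) * (1 / 72) ^ (4 * m) / T ^ 2 * (9 / 8 * q ^ 3)) * 72 ^ (4 * m) *
          (64 * m ^ 2 * T ^ 2) := by gcongr
    _ = 72 * m ^ 2 * q ^ 3 := by
        rw [one_div_pow]
        field_simp
        norm_num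

theorem exists_int_approx_cbrt_nine (hm : 0 < m) : ∃ A B : ℤ, 0 < B ∧ A ^ 3 < 9 * B ^ 3 ∧
    (9 * B ^ 3 - A ^ 3) * 1152 ^ (4 * m) ≤ 72 * m ^ 2 * B ^ 3 ∧
      B ≤ 30 * m ^ 2 * 143825112 ^ m := by
  obtain ⟨A, B, hA, hB⟩ := exists_int_eq_padePoly m
  have hlt := padePoly_third_cube_lt (n := 4 * m) (s := 9 / 8) (by lia) (by norm_num)
  have herror := padePoly_third_cube_error_le hm
  have hq_le := eight_pow_mul_eval_padePoly_le m
  have hq : 0 < (padePoly (-(1 / 3)) (4 * m)).eval (9 / 8) :=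
    eval_padePoly_pos (by norm_num [abs_lt]) (by norm_num)
  generalize (padePoly (-(1 / 3)) (4 * m)).eval (9 / 8) = q at *
  generalize (padePoly (1 / 3) (4 * m)).eval (9 / 8) = p at *
  have hD : 0 < padeDenominator m := by unfold padeDenominator; positivity
  have hD_le := padeDenominator_le hm
  have hm1 : (1 : ℝ) ≤ m := mod_cast hm
  set S := padeDenominator m * 8 ^ (4 * m) with hS
  have hSpos : 0 < S := by positivity
  have hpos : (0 : ℝ) < B := hB ▸ mul_pos hSpos hq
  have hcube : (A ^ 3 : ℝ) < 9 * B ^ 3 := by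
    rw [hA, hB]
    have := mul_lt_mul_of_pos_left hlt (pow_pos hSpos 3)
    linarith
  have hclose : (9 * B ^ 3 - A ^ 3 : ℝ) * 1152 ^ (4 * m) ≤ 72 * m ^ 2 * B ^ 3 := by
    rw [hA, hB]
    have := mul_le_mul_of_nonneg_left herror (pow_pos hSpos 3).le
    linarith
  have hheight : (B : ℝ) ≤ 30 * m ^ 2 * 143825112 ^ m :=
    calc (B : ℝ) = padeDenominator m * (8 ^ (4 * m) * q) := by rw [hB, hS, mul_assoc]
      _ ≤ 6 * m * 108 ^ m * ((4 * m + 1) * 1331714 ^ m) := by gcongr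
      _ ≤ 6 * m * 108 ^ m * (5 * m * 1331714 ^ m) := by gcongr; linarith
      _ = 30 * m ^ 2 * (108 * 1331714) ^ m := by rw [mul_pow]; ring
      _ = 30 * m ^ 2 * 143825112 ^ m := by norm_num
  exact ⟨A, B, mod_cast hpos, mod_cast hcube, mod_cast hclose, mod_cast hheight⟩

variable {x y z : ℤ}

theorem sq_le_of_cube_eq_of_approx {A B : ℤ} (h : y ^ 3 = x ^ 3 + 9 * z ^ 3) (hx : 0 < x)
    (hy : 0 < y) (hz : 0 ≤ z) (hB : 0 < B) (hAB : A ^ 3 < 9 * B ^ 3)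
    (hclose : 2 * ((9 * B ^ 3 - A ^ 3) * z ^ 3) ≤ (B * y) ^ 2) : y ^ 2 ≤ 2 * B * x ^ 3 := by
  have hlt : A * z < B * y := by
    refine lt_of_pow_lt_pow_left₀ 3 (by positivity) ?_
    have hBx : 0 < B ^ 3 * x ^ 3 := by positivity
    have hgap : 0 ≤ (9 * B ^ 3 - A ^ 3) * z ^ 3 := mul_nonneg (by lia) (by positivity)
    linear_combination hBx + hgap - B ^ 3 * h
  -- Distinct integers differ by at least one, so their cubes are far apart.
  have hsq : (B * y) ^ 2 ≤ (B * y) ^ 3 - (A * z) ^ 3 := by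
    have hBy : 1 ≤ B * y := mul_pos hB hy
    have hcube : (A * z) ^ 3 ≤ (B * y - 1) ^ 3 := (show Odd 3 by decide).pow_le_pow.2 (by lia)
    nlinarith
  have hcancel : B ^ 2 * y ^ 2 ≤ B ^ 2 * (2 * B * x ^ 3) := by
    linear_combination 2 * hsq + hclose + 2 * B ^ 3 * h
  exact le_of_mul_le_mul_left hcancel (by positivity)

theorem sq_le_of_cube_eq_of_mul_le (h : y ^ 3 = x ^ 3 + 9 * z ^ 3) (hx : 0 < x) (hy : 0 < y)
    (hz : 0 ≤ z) (hm : 0 < m) (hmy : 480 * m ^ 4 * y ≤ 12245 ^ m) :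
    y ^ 2 ≤ 60 * m ^ 2 * 143825112 ^ m * x ^ 3 := by
  obtain ⟨A, B, hB, hAB, hclose, hB_le⟩ := exists_int_approx_cbrt_nine hm
  have hzy : 9 * z ^ 3 ≤ y ^ 3 := by
    have : 0 < x ^ 3 := by positivity
    lia
  have hBy : 16 * m ^ 2 * B * y ≤ 1152 ^ (4 * m) :=
    calc 16 * m ^ 2 * B * y ≤ 16 * m ^ 2 * (30 * m ^ 2 * 143825112 ^ m) * y := by gcongr
      _ = 480 * m ^ 4 * y * 143825112 ^ m := by ring
      _ ≤ 12245 ^ m * 143825112 ^ m := by gcongr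
      _ ≤ 1152 ^ (4 * m) := by
        rw [← mul_pow, pow_mul]
        exact pow_le_pow_left₀ (by norm_num) (by norm_num) m
  have hsmall : 2 * ((9 * B ^ 3 - A ^ 3) * z ^ 3) ≤ (B * y) ^ 2 := by
    refine le_of_mul_le_mul_right ?_ (show (0 : ℤ) < 1152 ^ (4 * m) by positivity)
    calc 2 * ((9 * B ^ 3 - A ^ 3) * z ^ 3) * 1152 ^ (4 * m)
        = 2 * ((9 * B ^ 3 - A ^ 3) * 1152 ^ (4 * m)) * z ^ 3 := by ring
      _ ≤ 2 * (72 * m ^ 2 * B ^ 3) * z ^ 3 := by gcongr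
      _ = 16 * m ^ 2 * B ^ 3 * (9 * z ^ 3) := by ring
      _ ≤ 16 * m ^ 2 * B ^ 3 * y ^ 3 := by gcongr
      _ = (B * y) ^ 2 * (16 * m ^ 2 * B * y) := by ring
      _ ≤ (B * y) ^ 2 * 1152 ^ (4 * m) := by gcongr
  calc y ^ 2 ≤ 2 * B * x ^ 3 := sq_le_of_cube_eq_of_approx h hx hy hz hB hAB hsmall
    _ ≤ 2 * (30 * m ^ 2 * 143825112 ^ m) * x ^ 3 := by gcongr
    _ = 60 * m ^ 2 * 143825112 ^ m * x ^ 3 := by ring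

theorem mul_pow_ten_lt_pow (hm : 4000 ≤ m) :
    2100000000000000 * (m : ℝ) ^ 10 < (10327 / 10000) ^ m := by
  induction m, hm using Nat.le_induction with
  | base =>
    calc 2100000000000000 * ((4000 : ℕ) : ℝ) ^ 10 < (36 / 10) ^ 100 := by norm_num
      _ ≤ ((10327 / 10000) ^ 40) ^ 100 := by gcongr; norm_num
      _ = (10327 / 10000) ^ 4000 := (pow_mul _ _ _).symm
  | succ m hm ih =>
    have hm' : (4000 : ℝ) ≤ m := mod_cast hm
    calc 2100000000000000 * ((m + 1 : ℕ) : ℝ) ^ 10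
        ≤ 2100000000000000 * (4001 / 4000 * (m : ℝ)) ^ 10 := by push_cast; gcongr; linarith
      _ = (4001 / 4000) ^ 10 * (2100000000000000 * (m : ℝ) ^ 10) := by ring
      _ ≤ 10327 / 10000 * (2100000000000000 * (m : ℝ) ^ 10) := by gcongr; norm_num
      _ < 10327 / 10000 * (10327 / 10000) ^ m := by gcongr
      _ = (10327 / 10000) ^ (m + 1) := (pow_succ' _ _).symm

theorem exists_mul_le_pow (y : ℤ) : ∃ m : ℕ, 4000 ≤ m ∧ 480 * m ^ 4 * y ≤ 12245 ^ m := by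
  refine ⟨y.toNat + 4000, by lia, ?_⟩
  have hgrowth := mul_pow_ten_lt_pow (m := y.toNat + 4000) (by lia)
  have hy : (y : ℝ) ≤ (y.toNat + 4000 : ℕ) := mod_cast (by lia : y ≤ (y.toNat + 4000 : ℕ))
  have hone : (1 : ℝ) ≤ (y.toNat + 4000 : ℕ) := mod_cast (by lia : 1 ≤ y.toNat + 4000)
  generalize y.toNat + 4000 = m at *
  have hle : 480 * (m : ℝ) ^ 4 * y ≤ 12245 ^ m :=
    calc 480 * (m : ℝ) ^ 4 * y ≤ 480 * (m : ℝ) ^ 4 * m := by gcongr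
      _ = 480 * (m : ℝ) ^ 5 := by ring
      _ ≤ 2100000000000000 * (m : ℝ) ^ 10 := by
        gcongr
        · norm_num
        · norm_num
      _ ≤ (10327 / 10000) ^ m := hgrowth.le
      _ ≤ 12245 ^ m := by gcongr; norm_num
  exact_mod_cast hle

theorem exists_pow_near (hy : 3 ^ 51000 ≤ y) : ∃ m : ℕ, 4000 ≤ m ∧
    480 * m ^ 4 * y ≤ 12245 ^ m ∧ 12245 ^ m ≤ 480 * 12245 * m ^ 4 * y := by
  classical
  have hypos : 0 < y := (pow_pos three_pos _).trans_le hy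
  obtain ⟨hm_ge, hm_le⟩ := Nat.find_spec (exists_mul_le_pow y)
  have hmin := fun k => Nat.find_min (exists_mul_le_pow y) (m := k)
  generalize Nat.find (exists_mul_le_pow y) = m at *
  refine ⟨m, hm_ge, hm_le, ?_⟩
  have hm_ne : m ≠ 4000 := by
    rintro rfl
    refine hm_le.not_gt ?_
    calc (12245 : ℤ) ^ 4000 < (3 ^ 9) ^ 4000 :=
          pow_lt_pow_left₀ (by norm_num) (by norm_num) (by norm_num)
      _ = 3 ^ 36000 := (pow_mul _ _ _).symm
      _ ≤ 3 ^ 51000 := pow_le_pow_right₀ (by norm_num) (by norm_num)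
      _ ≤ y := hy
      _ ≤ 480 * (4000 : ℕ) ^ 4 * y := le_mul_of_one_le_left hypos.le (by norm_num)
  obtain ⟨k, rfl⟩ := Nat.exists_eq_add_of_le' (show 1 ≤ m by omega)
  have hk : 12245 ^ k < 480 * (k : ℤ) ^ 4 * y :=
    not_le.1 fun hle => hmin k k.lt_succ_self ⟨by omega, hle⟩
  calc (12245 : ℤ) ^ (k + 1) = 12245 * 12245 ^ k := pow_succ' _ _
    _ ≤ 12245 * (480 * (k : ℤ) ^ 4 * y) := by gcongr
    _ ≤ 12245 * (480 * ((k + 1 : ℕ) : ℤ) ^ 4 * y) := by gcongr; lia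
    _ = 480 * 12245 * ((k + 1 : ℕ) : ℤ) ^ 4 * y := by ring

theorem cube_le_of_pow_le (h : x ^ 3000 ≤ 12245 ^ m) : (x : ℝ) ^ 3 ≤ (10095 / 10000) ^ m := by
  refine le_of_pow_le_pow_left₀ (n := 1000) (by norm_num) (by positivity) ?_
  have hroot : (12245 : ℝ) ≤ (10095 / 10000) ^ 1000 :=
    calc (12245 : ℝ) ≤ (1603 / 1000) ^ 20 := by norm_num
      _ ≤ ((10095 / 10000) ^ 50) ^ 20 := by gcongr; norm_num
      _ = (10095 / 10000) ^ 1000 := (pow_mul _ _ _).symm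
  calc ((x : ℝ) ^ 3) ^ 1000 = x ^ 3000 := (pow_mul _ _ _).symm
    _ ≤ 12245 ^ m := mod_cast h
    _ ≤ ((10095 / 10000) ^ 1000) ^ m := by gcongr
    _ = ((10095 / 10000) ^ m) ^ 1000 := pow_right_comm _ _ _

theorem lt_pow_of_cube_eq (h : y ^ 3 = x ^ 3 + 9 * z ^ 3) (hx : 0 < x) (hy : 3 ^ 51000 ≤ y) :
    y < x ^ 3000 := by
  by_contra! hxy
  have hypos : 0 < y := (pow_pos three_pos _).trans_le hy
  have hz : 0 ≤ z := by
    have hle : x ^ 3 ≤ y ^ 3 :=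
      pow_le_pow_left₀ hx.le ((le_self_pow₀ hx (by norm_num)).trans hxy) 3
    have hcube : 0 ≤ z ^ 3 := by linarith
    exact (Odd.pow_nonneg_iff (by decide)).1 hcube
  obtain ⟨m, hm, hmy, hym⟩ := exists_pow_near hy
  have hm0 : 0 < m := by omega
  have hy_le : y ≤ 12245 ^ m := (le_mul_of_one_le_left hypos.le (by
    have : (0 : ℤ) < m ^ 4 := by positivity
    linarith)).trans hmy
  have hx_le := cube_le_of_pow_le (hxy.trans hy_le)
  have hsq : (y : ℝ) ^ 2 ≤ 60 * m ^ 2 * 143825112 ^ m * x ^ 3 :=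
    mod_cast sq_le_of_cube_eq_of_mul_le h hx hypos hz hm0 hmy
  have hym' : (12245 : ℝ) ^ m ≤ 480 * 12245 * m ^ 4 * y := mod_cast hym
  have hgrowth := mul_pow_ten_lt_pow hm
  refine lt_irrefl ((12245 ^ m : ℝ) ^ 2) ?_
  calc (12245 ^ m : ℝ) ^ 2 ≤ (480 * 12245 * m ^ 4 * (y : ℝ)) ^ 2 := by gcongr
    _ = (480 * 12245 * m ^ 4) ^ 2 * (y : ℝ) ^ 2 := by ring
    _ ≤ (480 * 12245 * m ^ 4) ^ 2 * (60 * m ^ 2 * 143825112 ^ m * (10095 / 10000) ^ m) := by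
        grw [hsq, hx_le]
    _ = (480 * 12245) ^ 2 * 60 * m ^ 10 * (143825112 * (10095 / 10000)) ^ m := by
        rw [mul_pow 143825112 (10095 / 10000 : ℝ)]
        ring
    _ ≤ 2100000000000000 * m ^ 10 * (143825112 * (10095 / 10000)) ^ m := by gcongr; norm_num
    _ < (10327 / 10000) ^ m * (143825112 * (10095 / 10000)) ^ m := by gcongr
    _ = (10327 / 10000 * (143825112 * (10095 / 10000))) ^ m := (mul_pow _ _ _).symm
    _ ≤ (12245 ^ 2) ^ m := by gcongr; norm_num
    _ = (12245 ^ m) ^ 2 := pow_right_comm _ _ _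

end Measure

/-! ### Eisenstein integers -/

section Eisenstein

/-- The Eisenstein integers `ℤ[ω]`, with `ω ^ 2 = -1 - ω` and norm `a ^ 2 - a * b + b ^ 2` at
`a + b * ω`. -/
abbrev Eisenstein := QuadraticAlgebra ℤ (-1) (-1)

namespace Eisenstein

theorem norm_eq (z : Eisenstein) : z.norm = z.re ^ 2 - z.re * z.im + z.im ^ 2 := by
  rw [QuadraticAlgebra.norm_def]
  ring

theorem four_mul_norm (z : Eisenstein) : 4 * z.norm = (2 * z.re - z.im) ^ 2 + 3 * z.im ^ 2 := by
  rw [norm_eq]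
  ring

theorem norm_nonneg (z : Eisenstein) : 0 ≤ z.norm := by
  nlinarith [four_mul_norm z]

theorem norm_pos {z : Eisenstein} (hz : z ≠ 0) : 0 < z.norm := by
  refine (norm_nonneg z).lt_of_ne' fun hnorm => hz ?_
  have hsum := four_mul_norm z
  rw [hnorm] at hsum
  have him : z.im = 0 := by nlinarith [sq_nonneg (2 * z.re - z.im), sq_nonneg z.im]
  have hre : z.re = 0 := by nlinarith
  exact QuadraticAlgebra.ext hre him

theorem exists_two_mul_abs_sub_le (u : ℤ) {n : ℤ} (hn : 0 < n) : ∃ a, 2 * |u - n * a| ≤ n := by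
  refine ⟨(2 * u + n) / (2 * n), ?_⟩
  have hdiv := Int.emod_add_mul_ediv (2 * u + n) (2 * n)
  have hnonneg := Int.emod_nonneg (2 * u + n) (show 2 * n ≠ 0 by lia)
  have hlt := Int.emod_lt_of_pos (2 * u + n) (show 0 < 2 * n by lia)
  rw [show 2 * |u - n * ((2 * u + n) / (2 * n))| = |2 * (u - n * ((2 * u + n) / (2 * n)))| by
    rw [abs_mul, abs_two], abs_le]
  constructor <;> linarith

theorem exists_norm_sub_mul_lt (x : Eisenstein) {y : Eisenstein} (hy : y ≠ 0) :
    ∃ q : Eisenstein, (x - y * q).norm < y.norm := by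
  have hn := norm_pos hy
  obtain ⟨a, ha⟩ := exists_two_mul_abs_sub_le (x * star y).re hn
  obtain ⟨b, hb⟩ := exists_two_mul_abs_sub_le (x * star y).im hn
  refine ⟨⟨a, b⟩, lt_of_mul_lt_mul_right ?_ hn.le⟩
  set e := (x * star y).re - y.norm * a with he
  set f := (x * star y).im - y.norm * b with hf
  have hmul : (x - y * ⟨a, b⟩).norm * y.norm = e ^ 2 - e * f + f ^ 2 := by
    simp only [he, hf, norm_eq, QuadraticAlgebra.re_sub, QuadraticAlgebra.im_sub,
      QuadraticAlgebra.re_mul, QuadraticAlgebra.im_mul, QuadraticAlgebra.re_star,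
      QuadraticAlgebra.im_star]
    ring
  rw [hmul]
  nlinarith [neg_abs_le e, le_abs_self e, neg_abs_le f, le_abs_self f]

instance : Nontrivial Eisenstein :=
  QuadraticAlgebra.algebraMap_injective.nontrivial

open Classical in
/-- Division with remainder for the norm; a definition rather than an instance, since only the
resulting `IsPrincipalIdealRing` is needed. -/
@[reducible]
noncomputable def euclideanDomain : EuclideanDomain Eisenstein :=
  { (inferInstance : CommRing Eisenstein), (inferInstance : Nontrivial Eisenstein) with
    quotient := fun x y => if h : y = 0 then 0 else (exists_norm_sub_mul_lt x h).choose
    remainder := fun x y =>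
      x - y * (if h : y = 0 then 0 else (exists_norm_sub_mul_lt x h).choose)
    quotient_zero := fun x => by simp
    quotient_mul_add_remainder_eq := fun x y => by ring
    r := fun x y => x.norm.natAbs < y.norm.natAbs
    r_wellFounded := (measure fun z : Eisenstein => z.norm.natAbs).wf
    remainder_lt := fun x y hy => by
      rw [dif_neg hy]
      exact Int.natAbs_lt_natAbs_of_nonneg_of_lt (norm_nonneg _)
        (exists_norm_sub_mul_lt x hy).choose_spec
    mul_left_not_lt := fun x y hy => by
      rw [map_mul, Int.natAbs_mul, not_lt]
      exact Nat.le_mul_of_pos_right _ (Int.natAbs_pos.2 (norm_pos hy).ne') }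

theorem exists_associated_cube {a b c : Eisenstein} (hab : IsCoprime a b) (h : a * b = c ^ 3) :
    ∃ d : Eisenstein, Associated (d ^ 3) a :=
  have : IsDomain Eisenstein := @EuclideanDomain.instIsDomain _ euclideanDomain
  have : IsPrincipalIdealRing Eisenstein :=
    @EuclideanDomain.to_principal_ideal_domain _ euclideanDomain
  exists_associated_pow_of_mul_eq_pow' hab h

theorem norm_eq_one_of_isUnit {u : Eisenstein} (hu : IsUnit u) : u.norm = 1 := by
  rw [QuadraticAlgebra.isUnit_iff_norm_isUnit, Int.isUnit_iff] at hu
  have := norm_nonneg u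
  lia

theorem eq_one_or_eq_neg_one_of_isUnit {u : Eisenstein} (hu : IsUnit u) (him : 3 ∣ u.im) :
    u = 1 ∨ u = -1 := by
  have hnorm := norm_eq_one_of_isUnit hu
  have hfour := four_mul_norm u
  obtain ⟨k, hk⟩ := him
  rw [hnorm, hk] at hfour
  have hk₀ : k = 0 := by nlinarith [sq_nonneg (2 * u.re - 3 * k), sq_nonneg k]
  subst hk₀
  have hre : u.re ^ 2 = 1 := by linarith
  exact (sq_eq_one_iff.1 hre).imp (fun h => QuadraticAlgebra.ext (by simpa) (by simpa))
    fun h => QuadraticAlgebra.ext (by simpa) (by simpa)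

theorem cube_eq (w : Eisenstein) :
    w ^ 3 = ⟨w.re ^ 3 + w.im ^ 3 - 3 * w.re * w.im ^ 2, 3 * w.re * w.im * (w.re - w.im)⟩ := by
  ext <;> simp only [pow_succ, pow_zero, one_mul, QuadraticAlgebra.re_mul,
    QuadraticAlgebra.im_mul] <;> ring

theorem isCoprime_star {z : Eisenstein} (hz : IsCoprime z.re z.im) (h3 : IsCoprime z.norm 3) :
    IsCoprime z (star z) := by
  obtain ⟨s, t, hst⟩ := hz
  obtain ⟨e, f, hef⟩ := h3
  have hthree : ∃ A B : Eisenstein, A * z + B * star z = 3 := by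
    refine ⟨⟨s - t, -s - 2 * t⟩, star ⟨s - t, -s - 2 * t⟩, ?_⟩
    ext
    · simp only [QuadraticAlgebra.star_mk, QuadraticAlgebra.re_add, QuadraticAlgebra.re_mul,
        QuadraticAlgebra.re_star, QuadraticAlgebra.im_star, QuadraticAlgebra.re_ofNat]
      linear_combination 3 * hst
    · simp only [QuadraticAlgebra.star_mk, QuadraticAlgebra.im_add, QuadraticAlgebra.im_mul,
        QuadraticAlgebra.re_star, QuadraticAlgebra.im_star, QuadraticAlgebra.im_ofNat]
      ring
  obtain ⟨A, B, hAB⟩ := hthree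
  have hnorm : (z.norm : Eisenstein) = z * star z :=
    QuadraticAlgebra.algebraMap_norm_eq_mul_star z
  refine ⟨f * A, e * z + f * B, ?_⟩
  calc f * A * z + (e * z + f * B) * star z = e * (z * star z) + f * (A * z + B * star z) := by ring
    _ = ((e * z.norm + f * 3 : ℤ) : Eisenstein) := by rw [← hnorm, hAB]; push_cast; ring
    _ = 1 := by rw [hef, Int.cast_one]

theorem exists_eq_cube_of_norm_eq_cube {z : Eisenstein} {v : ℤ} (hz : IsCoprime z.re z.im)
    (him : 3 ∣ z.im) (hv : ¬ 3 ∣ v) (hnorm : z.norm = v ^ 3) : ∃ w : Eisenstein, z = w ^ 3 := by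
  have hthree : ∀ {a : ℤ}, ¬ 3 ∣ a ↔ IsCoprime 3 a := Int.prime_three.coprime_iff_not_dvd.symm
  have hprod : z * star z = (v : Eisenstein) ^ 3 := by
    rw [← QuadraticAlgebra.algebraMap_norm_eq_mul_star, hnorm]
    push_cast
    rfl
  have hcop : IsCoprime z.norm 3 := hnorm ▸ (hthree.1 hv).symm.pow_left
  obtain ⟨w, u, hu⟩ := exists_associated_cube (isCoprime_star hz hcop) hprod
  obtain ⟨B, hB⟩ : 3 ∣ (w ^ 3).im := ⟨w.re * w.im * (w.re - w.im), by rw [cube_eq]; ring⟩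
  have hre : ¬ 3 ∣ (w ^ 3).re := by
    rintro ⟨A, hA⟩
    have hnorm_w : (w ^ 3).norm = v ^ 3 := by
      rw [← hnorm, ← hu, map_mul, norm_eq_one_of_isUnit u.isUnit, mul_one]
    rw [norm_eq, hA, hB] at hnorm_w
    have hdvd : 3 ∣ v ^ 3 := ⟨3 * (A ^ 2 - A * B + B ^ 2), by rw [← hnorm_w]; ring⟩
    exact hv (Int.prime_three.dvd_of_dvd_pow hdvd)
  have hunit : 3 ∣ (u : Eisenstein).im := by
    obtain ⟨k, hk⟩ := him
    have hmul : (w ^ 3).re * (u : Eisenstein).im =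
        3 * (k - B * (u : Eisenstein).re + B * (u : Eisenstein).im) := by
      rw [← hu, QuadraticAlgebra.im_mul, hB] at hk
      linear_combination hk
    exact (hthree.1 hre).dvd_of_dvd_mul_left ⟨_, hmul⟩
  rcases eq_one_or_eq_neg_one_of_isUnit u.isUnit hunit with hone | hneg
  · exact ⟨w, by rw [← hu, hone, mul_one]⟩
  · exact ⟨-w, by rw [← hu, hneg]; ring⟩

end Eisenstein

end Eisenstein

/-! ### Three-descent on `x ^ 3 + y ^ 3 = 9 * t ^ 3` -/

section Descent

/-- A primitive integral point with `t ≠ 0` on the curve `x ^ 3 + y ^ 3 = 9 * t ^ 3` whose last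
coordinate is divisible by `3 ^ k`. -/
structure IsCubicPoint (k : ℕ) (x y t : ℤ) : Prop where
  isCoprime : IsCoprime x y
  cube_add_cube : x ^ 3 + y ^ 3 = 9 * t ^ 3
  ne_zero : t ≠ 0
  pow_dvd : 3 ^ k ∣ t

theorem three_dvd_add_of_three_dvd_cube_add_cube {x y : ℤ} (h : 3 ∣ x ^ 3 + y ^ 3) :
    3 ∣ x + y := by
  have h' := (ZMod.intCast_zmod_eq_zero_iff_dvd (x ^ 3 + y ^ 3) 3).2 h
  push_cast at h'
  rw [ZMod.pow_card, ZMod.pow_card] at h'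
  exact (ZMod.intCast_zmod_eq_zero_iff_dvd (x + y) 3).1 (by push_cast; exact h')

theorem not_three_dvd_of_norm_form_eq_cube {a b v : ℤ} (hab : IsCoprime a b)
    (h : a ^ 2 - a * b + b ^ 2 = v ^ 3) : ¬ 3 ∣ v := by
  rintro ⟨w, rfl⟩
  obtain ⟨d, hd⟩ : 3 ∣ a + b :=
    Int.prime_three.dvd_of_dvd_pow (n := 2) ⟨a * b + 9 * w ^ 3, by linear_combination h⟩
  have hmul : 3 * (a * b) = 3 * (3 * (d ^ 2 - 3 * w ^ 3)) := by
    linear_combination (a + b + 3 * d) * hd - h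
  have hprod : 3 ∣ a * b := ⟨_, mul_left_cancel₀ three_ne_zero hmul⟩
  have hboth : 3 ∣ a ∧ 3 ∣ b := by
    rcases Int.prime_three.dvd_or_dvd hprod with hdvd | hdvd <;> constructor <;> lia
  exact Int.prime_three.not_isUnit (hab.isUnit_of_dvd' hboth.1 hboth.2)

theorem exists_cube_factors {a b t : ℤ} (hab : IsCoprime a b)
    (h : b * (a ^ 2 - a * b + b ^ 2) = t ^ 3) :
    ∃ g v : ℤ, b = g ^ 3 ∧ a ^ 2 - a * b + b ^ 2 = v ^ 3 ∧ g * v = t := by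
  have hcop : IsCoprime b (a ^ 2 - a * b + b ^ 2) := by
    rw [show a ^ 2 - a * b + b ^ 2 = a ^ 2 + b * (b - a) by ring]
    exact hab.symm.pow_right.add_mul_left_right _
  obtain ⟨⟨g, hg⟩, v, hv⟩ := Int.eq_pow_of_mul_eq_pow_odd hcop (by decide) h
  refine ⟨g, v, hg, hv, (Odd.strictMono_pow (n := 3) (by decide)).injective ?_⟩
  rw [← h, mul_pow, hv, ← hg]

theorem exists_isCubicPoint_of_three_dvd {k : ℕ} {P Q R h : ℤ} (hsum : P + Q + R = 0)
    (hQR : IsCoprime Q R) (hP : 3 ∣ P) (hprod : P * Q * R = 9 * h ^ 3) (h0 : h ≠ 0)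
    (hk : 3 ^ k ∣ h) : ∃ r s t : ℤ, IsCubicPoint k r s t ∧ Q = -r ^ 3 ∧ R = -s ^ 3 := by
  have hPQR : IsCoprime P (Q * R) := by
    obtain rfl : P = -Q - R := by linarith
    obtain ⟨a, b, hab⟩ := hQR
    exact IsCoprime.mul_right ⟨-b, a - b, by linear_combination hab⟩
      ⟨-a, b - a, by linear_combination hab⟩
  have hthree : IsCoprime 3 (Q * R) := hPQR.of_isCoprime_of_dvd_left hP
  obtain ⟨P', rfl⟩ : (3 : ℤ) ^ 2 ∣ P :=
    hthree.pow_left.dvd_of_dvd_mul_right ⟨h ^ 3, by linear_combination hprod⟩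
  have hcube : P' * (Q * R) = h ^ 3 := by linarith
  obtain ⟨⟨t, rfl⟩, w, hw⟩ :=
    Int.eq_pow_of_mul_eq_pow_odd hPQR.of_mul_left_right (by decide : Odd 3) hcube
  obtain ⟨⟨r, rfl⟩, s, rfl⟩ := Int.eq_pow_of_mul_eq_pow_odd hQR (by decide : Odd 3) hw
  obtain rfl : t * (r * s) = h :=
    (Odd.strictMono_pow (n := 3) (by decide)).injective (by rw [← hcube]; ring)
  rw [← mul_pow, IsCoprime.pow_right_iff three_pos] at hthree
  rw [IsCoprime.pow_iff three_pos three_pos] at hQR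
  exact ⟨-r, -s, t,
    { isCoprime := hQR.neg_neg
      cube_add_cube := by linear_combination -hsum
      ne_zero := left_ne_zero_of_mul h0
      pow_dvd := hthree.pow_left.dvd_of_dvd_mul_right hk }, by ring, by ring⟩

theorem exists_isCubicPoint_of_add_add_eq_zero {k : ℕ} {P Q R h : ℤ} (hsum : P + Q + R = 0)
    (hPQ : IsCoprime P Q) (hprod : P * Q * R = 9 * h ^ 3) (h0 : h ≠ 0) (hk : 3 ^ k ∣ h) :
    ∃ r s t : ℤ, IsCubicPoint k r s t ∧
      P ^ 2 + P * Q + Q ^ 2 = r ^ 6 + r ^ 3 * s ^ 3 + s ^ 6 := by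
  obtain rfl : R = -P - Q := by linarith
  have hdvd : 3 ∣ P * Q * (-P - Q) := ⟨3 * h ^ 3, by linear_combination hprod⟩
  have hQR : IsCoprime Q (-P - Q) := by
    obtain ⟨a, b, hab⟩ := hPQ
    exact ⟨b - a, -a, by linear_combination hab⟩
  have hRP : IsCoprime (-P - Q) P := by
    obtain ⟨a, b, hab⟩ := hPQ
    exact ⟨-b, a - b, by linear_combination hab⟩
  rcases Int.prime_three.dvd_or_dvd hdvd with hdvd | hR
  · rcases Int.prime_three.dvd_or_dvd hdvd with hP | hQ
    · obtain ⟨r, s, t, hpoint, hQ, hR⟩ :=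
        exists_isCubicPoint_of_three_dvd hsum hQR hP hprod h0 hk
      exact ⟨r, s, t, hpoint, by rw [show P = r ^ 3 + s ^ 3 by linarith, hQ]; ring⟩
    · obtain ⟨r, s, t, hpoint, hR, hP⟩ :=
        exists_isCubicPoint_of_three_dvd (by ring) hRP hQ (by linear_combination hprod) h0 hk
      exact ⟨r, s, t, hpoint, by rw [show Q = r ^ 3 + s ^ 3 by linarith, hP]; ring⟩
  · obtain ⟨r, s, t, hpoint, rfl, rfl⟩ :=
      exists_isCubicPoint_of_three_dvd (by ring) hPQ hR (by linear_combination hprod) h0 hk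
    exact ⟨r, s, t, hpoint, by ring⟩

theorem exists_eisenstein_cube_coords {a b v : ℤ} (hab : IsCoprime a b) (hb : 3 ∣ b)
    (h : a ^ 2 - a * b + b ^ 2 = v ^ 3) :
    ∃ p q : ℤ, IsCoprime p q ∧ p ^ 2 - p * q + q ^ 2 = v ∧ b = 3 * p * q * (p - q) := by
  have hnorm : (⟨a, b⟩ : Eisenstein).norm = v ^ 3 := by rw [Eisenstein.norm_eq, ← h]
  obtain ⟨w, hw⟩ := Eisenstein.exists_eq_cube_of_norm_eq_cube hab hb
    (not_three_dvd_of_norm_form_eq_cube hab h) hnorm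
  have hwnorm : w.norm = v := (Odd.strictMono_pow (n := 3) (by decide)).injective <| by
    rw [← hnorm, hw, map_pow]
  rw [Eisenstein.cube_eq, QuadraticAlgebra.mk.injEq] at hw
  obtain ⟨ha, hb⟩ := hw
  refine ⟨w.re, w.im, ?_, by rw [← Eisenstein.norm_eq, hwnorm], hb⟩
  obtain ⟨c, d, hcd⟩ := hab
  rw [ha, hb] at hcd
  exact ⟨c * w.re ^ 2 + 3 * d * w.im * (w.re - w.im), c * (w.im ^ 2 - 3 * w.re * w.im),
    by linear_combination hcd⟩

namespace IsCubicPoint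

variable {k : ℕ} {x y t : ℤ}

theorem exists_norm_form_eq_cube (h : IsCubicPoint (k + 1) x y t) :
    ∃ p q s v : ℤ, IsCoprime p q ∧ p ^ 2 - p * q + q ^ 2 = v ∧ p * q * (p - q) = 9 * s ^ 3 ∧
      s ≠ 0 ∧ 3 ^ k ∣ s ∧ x ^ 2 - x * y + y ^ 2 = 3 * v ^ 3 := by
  obtain ⟨b, hb⟩ := three_dvd_add_of_three_dvd_cube_add_cube (x := x) (y := y)
    ⟨3 * t ^ 3, by linear_combination h.cube_add_cube⟩
  obtain ⟨a, rfl⟩ : ∃ a, x = a + b := ⟨x - b, by ring⟩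
  obtain rfl : y = 2 * b - a := by linarith
  have hab : IsCoprime a b := by
    obtain ⟨c, d, hcd⟩ := h.isCoprime
    exact ⟨c - d, c + 2 * d, by linear_combination hcd⟩
  obtain ⟨g, v, hg, hv, rfl⟩ := exists_cube_factors (t := t) hab (by linarith [h.cube_add_cube])
  have hthree : IsCoprime 3 v :=
    Int.prime_three.coprime_iff_not_dvd.2 (not_three_dvd_of_norm_form_eq_cube hab hv)
  obtain ⟨c, rfl⟩ : 3 ^ (k + 1) ∣ g := hthree.pow_left.dvd_of_dvd_mul_right h.pow_dvd
  obtain ⟨p, q, hpq, hnorm, hpqb⟩ := exists_eisenstein_cube_coords hab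
    ⟨9 * (3 ^ k * c) ^ 3, by rw [hg]; ring⟩ hv
  have hpqc : p * q * (p - q) = 9 * (3 ^ k * c) ^ 3 :=
    mul_left_cancel₀ three_ne_zero (by linear_combination hg - hpqb)
  exact ⟨p, q, 3 ^ k * c, v, hpq, hnorm, hpqc,
    fun h0 => h.ne_zero (by linear_combination 3 * v * h0), dvd_mul_right _ _,
    by linear_combination 3 * hv⟩

theorem exists_descent (h : IsCubicPoint (k + 1) x y t) :
    ∃ r s t' : ℤ, IsCubicPoint k r s t' ∧
      x ^ 2 - x * y + y ^ 2 = 3 * (r ^ 6 + r ^ 3 * s ^ 3 + s ^ 6) ^ 3 := by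
  obtain ⟨p, q, u, v, hpq, hnorm, hprod, hu, hk, hxy⟩ := h.exists_norm_form_eq_cube
  obtain ⟨r, s, t', hpoint, hrs⟩ := exists_isCubicPoint_of_add_add_eq_zero (P := p) (Q := -q)
    (R := q - p) (by ring) hpq.neg_right (by linear_combination hprod) hu hk
  exact ⟨r, s, t', hpoint, by rw [hxy, ← hrs, ← hnorm]; ring⟩

end IsCubicPoint

theorem three_mul_max_abs_sq_le (a b : ℤ) :
    3 * max |a| |b| ^ 2 ≤ 4 * (a ^ 2 + a * b + b ^ 2) := by
  rcases max_choice |a| |b| with h | h <;> rw [h, sq_abs]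
  · nlinarith [sq_nonneg (a + 2 * b)]
  · nlinarith [sq_nonneg (2 * a + b)]

theorem norm_form_le_three_mul_max_abs_sq (x y : ℤ) :
    x ^ 2 - x * y + y ^ 2 ≤ 3 * max |x| |y| ^ 2 := by
  have hx : x ^ 2 ≤ max |x| |y| ^ 2 := sq_le_sq.2 ((le_max_left _ _).trans (le_abs_self _))
  have hy : y ^ 2 ≤ max |x| |y| ^ 2 := sq_le_sq.2 ((le_max_right _ _).trans (le_abs_self _))
  nlinarith [sq_nonneg (x + y)]

theorem max_abs_pow_eight_le {x y r s : ℤ} (hrs : 2 ≤ max |r| |s|)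
    (h : x ^ 2 - x * y + y ^ 2 = 3 * (r ^ 6 + r ^ 3 * s ^ 3 + s ^ 6) ^ 3) :
    max |r| |s| ^ 8 ≤ max |x| |y| := by
  have hcubes := three_mul_max_abs_sq_le (r ^ 3) (s ^ 3)
  have hmax : max |r ^ 3| |s ^ 3| = max |r| |s| ^ 3 := by
    rw [abs_pow, abs_pow]
    exact ((pow_left_monotoneOn (n := 3)).map_max (abs_nonneg r) (abs_nonneg s)).symm
  have hnorm := norm_form_le_three_mul_max_abs_sq x y
  rw [h] at hnorm
  set M := max |r| |s|
  rw [hmax] at hcubes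
  set v := r ^ 6 + r ^ 3 * s ^ 3 + s ^ 6
  have hcube : (3 * M ^ 6) ^ 3 ≤ (4 * v) ^ 3 :=
    pow_le_pow_left₀ (by positivity) (by linear_combination hcubes) 3
  have hfour : 4 * M ^ 16 ≤ M ^ 18 :=
    calc 4 * M ^ 16 = 2 ^ 2 * M ^ 16 := by norm_num
      _ ≤ M ^ 2 * M ^ 16 := by gcongr
      _ = M ^ 18 := by ring
  refine le_of_pow_le_pow_left₀ two_ne_zero (by positivity) ?_
  nlinarith

theorem IsCubicPoint.two_pow_eight_pow_le_max_abs {k : ℕ} {x y t : ℤ}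
    (h : IsCubicPoint k x y t) : 2 ^ 8 ^ k ≤ max |x| |y| := by
  induction k generalizing x y t with
  | zero =>
    by_contra! hlt
    simp only [pow_zero, pow_one, max_lt_iff, abs_lt] at hlt
    have ht : t ^ 3 ≠ 0 := pow_ne_zero 3 h.ne_zero
    have heq := h.cube_add_cube
    obtain ⟨⟨hx, hx'⟩, hy, hy'⟩ := hlt
    interval_cases x <;> interval_cases y <;> lia
  | succ k ih =>
    obtain ⟨r, s, t', hpoint, hxy⟩ := h.exists_descent
    have hrs := ih hpoint
    have htwo : 2 ≤ max |r| |s| := (le_self_pow₀ one_le_two (by positivity)).trans hrs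
    calc (2 : ℤ) ^ 8 ^ (k + 1) = (2 ^ 8 ^ k) ^ 8 := by rw [← pow_mul, pow_succ]
      _ ≤ max |r| |s| ^ 8 := by gcongr
      _ ≤ max |x| |y| := max_abs_pow_eight_le htwo hxy

end Descent

/-! ### Sieving by small primes -/

section Sieve

/-- Whether `x ^ 3 + y ^ 3 = K * (T * x + y) ^ 3` has a point `[x : y]` on the projective line over
`ZMod p`; the first disjunct is the point at infinity `[1 : 0]`. -/
def hasProjectiveRoot (p K T : ℕ) : Bool :=
  K * T ^ 3 % p == 1 % p ||
    (List.range p).any fun x => (x ^ 3 + 1) % p == K * (T * x + 1) ^ 3 % p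

/-- One refinement step of the sieve for the exponent `c` in
`x ^ 3 + y ^ 3 = K * (3 ^ c * x + y) ^ 3`. A state `(m, S)` records that `c % m ∈ S`; a step
`(k, ps)` passes to residues modulo `m * k` and discards those without a solution modulo some
prime of `ps`. The solvability modulo `p` depends on `27 ^ c` only, whence the condition on `p`. -/
def sieveStep (K : ℕ) (state step : ℕ × List ℕ) : ℕ × List ℕ :=
  (state.1 * step.1,
    (state.2.flatMap fun r => (List.range step.1).map fun i => r + state.1 * i).filter fun r =>
      step.2.all fun p =>
        !(27 ^ (state.1 * step.1) % p == 1 % p) || hasProjectiveRoot p K (3 ^ r % p))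

/-- For `b ≤ 5`, a sieve that leaves no exponent `0 < c < 51000` when `K = 9 * 27 ^ b`. -/
def sieveSteps : ℕ → List (ℕ × List ℕ)
  | 0 => [(4, [5]), (5, [31, 61]), (3, [181]), (5, [151, 601]), (7, [29, 43, 71]),
      (4, [17, 113, 577]), (13, [53, 79, 131, 157])]
  | 1 => [(4, [5]), (4, [97]), (5, [31, 61, 241]), (7, [29, 71, 211]), (11, [23, 67, 89]),
      (13, [53, 79, 131, 313])]
  | 2 => [(10, [31, 61]), (7, [43, 71, 421]), (3, [19, 631]), (3, [379, 433, 541]), (4, [281]),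
      (2, [17, 97, 113]), (7, [197, 491]), (5, [101, 601])]
  | 3 => [(4, [5]), (4, [17, 41]), (5, [11, 61]), (7, [29, 113, 211, 337, 421]), (3, [127, 181]),
      (5, [151, 401]), (11, [89, 199])]
  | 4 => [(4, [5]), (5, [11, 61, 1181]), (7, [29, 43, 421]), (2, [281]), (2, [17, 113]),
      (13, [53, 79, 157, 1249]), (3, [19, 937]), (4, [449, 1153])]
  | 5 => [(4, [5]), (5, [11, 31]), (3, [181]), (7, [29, 127, 211, 421]), (4, [17, 113]),
      (5, [101]), (11, [23, 67, 89, 199]), (5, [251])]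
  | _ => []

theorem hasProjectiveRoot_of_eq {p : ℕ} [Fact p.Prime] {K T : ℕ} {x y : ZMod p}
    (hxy : x ≠ 0 ∨ y ≠ 0) (h : x ^ 3 + y ^ 3 = K * (T * x + y) ^ 3) :
    hasProjectiveRoot p K T := by
  simp only [hasProjectiveRoot, Bool.or_eq_true, beq_iff_eq, List.any_eq_true, List.mem_range]
  rcases eq_or_ne y 0 with rfl | hy
  · left
    have hx : x ^ 3 ≠ 0 := pow_ne_zero 3 (by simpa using hxy)
    have hKT : (K * T ^ 3 : ZMod p) = 1 := mul_right_cancel₀ hx (by linear_combination -h)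
    exact (ZMod.natCast_eq_natCast_iff' _ _ _).1 (by exact_mod_cast hKT)
  · right
    have hroot : (x / y) ^ 3 + 1 = K * (T * (x / y) + 1) ^ 3 := by
      field_simp
      linear_combination h
    refine ⟨(x / y).val, ZMod.val_lt _, (ZMod.natCast_eq_natCast_iff' _ _ _).1 ?_⟩
    push_cast
    rwa [ZMod.natCast_zmod_val]

variable {K c : ℕ} {x y : ℤ}

theorem hasProjectiveRoot_mod (hxy : IsCoprime x y) (h : x ^ 3 + y ^ 3 = K * (3 ^ c * x + y) ^ 3)
    {p M : ℕ} (hp : p.Prime) (hM : 27 ^ M % p = 1 % p) :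
    hasProjectiveRoot p K (3 ^ (c % M) % p) := by
  have : Fact p.Prime := ⟨hp⟩
  have h27 : (3 ^ (M * (c / M)) : ZMod p) ^ 3 = 1 := by
    have hM' : (27 ^ M : ZMod p) = 1 := by exact_mod_cast (ZMod.natCast_eq_natCast_iff' _ _ _).2 hM
    calc (3 ^ (M * (c / M)) : ZMod p) ^ 3 = ((3 ^ 3) ^ M) ^ (c / M) := by
          rw [← pow_mul, ← pow_mul, ← pow_mul]; congr 1; ring
      _ = 1 := by norm_num [hM']
  have hc : (3 ^ c : ZMod p) = 3 ^ (c % M) * 3 ^ (M * (c / M)) := by rw [← pow_add, Nat.mod_add_div]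
  have hmod : (x : ZMod p) ^ 3 + (y : ZMod p) ^ 3 = K * (3 ^ c * x + y) ^ 3 := by
    exact_mod_cast congrArg (Int.cast : ℤ → ZMod p) h
  apply hasProjectiveRoot_of_eq (x := 3 ^ (M * (c / M)) * (x : ZMod p)) (y := y)
  · obtain ⟨u, v, huv⟩ := hxy
    by_contra! hzero
    have hx : (x : ZMod p) ^ 3 = 0 := by
      rw [← one_mul ((x : ZMod p) ^ 3), ← h27, ← mul_pow, hzero.1, zero_pow three_ne_zero]
    have hone : (u * x + v * y : ZMod p) = 1 := by
      exact_mod_cast congrArg (Int.cast : ℤ → ZMod p) huv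
    rw [pow_eq_zero_iff three_ne_zero] at hx
    simp [hx, hzero.2] at hone
  · rw [ZMod.natCast_mod]
    push_cast
    rw [← mul_assoc, ← hc, mul_pow, h27, one_mul, hmod]

theorem mod_mem_sieveStep (hxy : IsCoprime x y) (h : x ^ 3 + y ^ 3 = K * (3 ^ c * x + y) ^ 3)
    {state step : ℕ × List ℕ} (hk : 0 < step.1) (hprime : ∀ p ∈ step.2, p.Prime)
    (hc : c % state.1 ∈ state.2) :
    c % (sieveStep K state step).1 ∈ (sieveStep K state step).2 := by
  simp only [sieveStep, List.mem_filter, List.mem_flatMap, List.mem_map, List.mem_range,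
    List.all_eq_true, Bool.or_eq_true, Bool.not_eq_true', beq_eq_false_iff_ne]
  refine ⟨⟨_, hc, c / state.1 % step.1, Nat.mod_lt _ hk, Nat.mod_mul.symm⟩, fun p hp => ?_⟩
  exact (ne_or_eq _ _).imp_right (hasProjectiveRoot_mod hxy h (hprime p hp))

theorem mod_mem_foldl_sieveStep (hxy : IsCoprime x y)
    (h : x ^ 3 + y ^ 3 = K * (3 ^ c * x + y) ^ 3) {steps : List (ℕ × List ℕ)}
    (hsteps : ∀ step ∈ steps, 0 < step.1 ∧ ∀ p ∈ step.2, p.Prime) {state : ℕ × List ℕ}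
    (hc : c % state.1 ∈ state.2) :
    c % (steps.foldl (sieveStep K) state).1 ∈ (steps.foldl (sieveStep K) state).2 := by
  induction steps generalizing state with
  | nil => exact hc
  | cons step steps ih =>
    obtain ⟨⟨hk, hprime⟩, htail⟩ := List.forall_mem_cons.1 hsteps
    exact ih htail (mod_mem_sieveStep hxy h hk hprime hc)

theorem pos_and_prime_of_mem_sieveSteps (b : ℕ) :
    ∀ step ∈ sieveSteps b, 0 < step.1 ∧ ∀ p ∈ step.2, p.Prime := by
  unfold sieveSteps
  split <;> norm_num

/-- Whether every positive integer with residue in `S` modulo `m` is at least `N`, where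
`state = (m, S)`. -/
def residuesAtLeast (N : ℕ) (state : ℕ × List ℕ) : Bool :=
  Nat.ble N state.1 && state.2.all fun r => r == 0 || Nat.ble N r

theorem le_of_residuesAtLeast {N : ℕ} {state : ℕ × List ℕ} (hstate : residuesAtLeast N state)
    (hc : c % state.1 ∈ state.2) (hpos : 0 < c) : N ≤ c := by
  simp only [residuesAtLeast, Bool.and_eq_true, Nat.ble_eq, List.all_eq_true, Bool.or_eq_true,
    beq_iff_eq] at hstate
  rcases hstate.2 _ hc with hzero | hle
  · exact hstate.1.trans (Nat.le_of_dvd hpos (Nat.dvd_of_mod_eq_zero hzero))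
  · exact hle.trans (Nat.mod_le _ _)

theorem residuesAtLeast_sieveSteps : ∀ b < 6,
    residuesAtLeast 51000 ((sieveSteps b).foldl (sieveStep (9 * 27 ^ b)) (1, [0])) := by
  decide +kernel

theorem le_exponent_of_lt_six {b : ℕ} (hb : b < 6) (hc : 0 < c) (hxy : IsCoprime x y)
    (h : x ^ 3 + y ^ 3 = 9 * 27 ^ b * (3 ^ c * x + y) ^ 3) : 51000 ≤ c :=
  le_of_residuesAtLeast (residuesAtLeast_sieveSteps b hb)
    (mod_mem_foldl_sieveStep hxy (by exact_mod_cast h) (pos_and_prime_of_mem_sieveSteps b)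
      (by simp [Nat.mod_one])) hc

end Sieve

/-! ### Assembling the proof -/

section Assembly

variable {K T x y : ℤ}

theorem neg_of_cube_add_cube_eq (hK : 1 < K) (hT : 0 < T) (hy : 0 < y)
    (h : x ^ 3 + y ^ 3 = K * (T * x + y) ^ 3) : x < 0 := by
  by_contra! hx
  have hle : x ^ 3 + y ^ 3 ≤ (T * x + y) ^ 3 :=
    calc x ^ 3 + y ^ 3 ≤ (x + y) ^ 3 := by
          have : 0 ≤ 3 * x * y * (x + y) := by positivity
          linarith
      _ ≤ (T * x + y) ^ 3 := by gcongr; exact le_mul_of_one_le_left hx hT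
  have : 0 < (T * x + y) ^ 3 := by positivity
  nlinarith

theorem linear_form_pos_of_cube_add_cube_eq (hK : 1 < K) (hT : 1 < T) (hy : 0 < y)
    (h : x ^ 3 + y ^ 3 = K * (T * x + y) ^ 3) : 0 < T * x + y := by
  have hx := neg_of_cube_add_cube_eq hK (by lia) hy h
  by_contra! hform
  have hcube : 0 ≤ (-(T * x + y)) ^ 3 := pow_nonneg (by lia) 3
  have hyx : y ≤ -x := le_of_pow_le_pow_left₀ three_ne_zero (by lia) (by nlinarith)
  have hle : (-x) ^ 3 ≤ (-(T * x + y)) ^ 3 := pow_le_pow_left₀ (by lia) (by nlinarith) 3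
  have : 0 < y ^ 3 := by positivity
  nlinarith

theorem dvd_sub_one_of_cube_add_cube_eq (hxy : IsCoprime x y)
    (h : x ^ 3 + y ^ 3 = K * (T * x + y) ^ 3) : x ∣ K - 1 := by
  have hdvd : x ∣ (K - 1) * y ^ 3 :=
    ⟨x ^ 2 - K * (T ^ 3 * x ^ 2 + 3 * T ^ 2 * x * y + 3 * T * y ^ 2), by linear_combination -h⟩
  exact hxy.pow_right.dvd_of_dvd_mul_right hdvd

theorem mul_le_eight_pow {b : ℕ} (hb : 6 ≤ b) : 6000 * (3 * b + 2) ≤ 8 ^ b := by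
  induction b, hb using Nat.le_induction with
  | base => norm_num
  | succ b _ ih => rw [pow_succ]; lia

theorem three_pow_le_of_two_pow_le {n N : ℕ} (hn : 2 * n ≤ N) (hy : 2 ^ N ≤ y) : 3 ^ n ≤ y :=
  calc (3 : ℤ) ^ n ≤ (2 ^ 2) ^ n := by gcongr; norm_num
    _ = 2 ^ (2 * n) := (pow_mul _ _ _).symm
    _ ≤ 2 ^ N := by gcongr; norm_num
    _ ≤ y := hy

theorem three_pow_le_of_cube_add_cube_eq {b c : ℕ} (hc : 0 < c) (hxy : IsCoprime x y)
    (hxneg : x < 0) (hform : 0 < 3 ^ c * x + y)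
    (h : x ^ 3 + y ^ 3 = 9 * 27 ^ b * (3 ^ c * x + y) ^ 3) :
    3 ^ 51000 ≤ y ∧ 3 ^ ((3 * b + 2) * 3000) ≤ y := by
  have hTpos : (1 : ℤ) ≤ 3 ^ c := one_le_pow₀ (by norm_num)
  have hcy : 3 ^ c ≤ y := by nlinarith
  rcases lt_or_ge b 6 with hb | hb
  · have hle : 3 ^ 51000 ≤ y :=
      (pow_le_pow_right₀ (by norm_num) (le_exponent_of_lt_six hb hc hxy h)).trans hcy
    exact ⟨hle, (pow_le_pow_right₀ (by norm_num) (by lia)).trans hle⟩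
  · have h27 : (27 : ℤ) ^ b = (3 ^ b) ^ 3 := by rw [← pow_mul, mul_comm, pow_mul]; norm_num
    have hpoint : IsCubicPoint b x y (3 ^ b * (3 ^ c * x + y)) :=
      ⟨hxy, by rw [h, h27]; ring, by positivity, dvd_mul_right _ _⟩
    have hdescent := hpoint.two_pow_eight_pow_le_max_abs
    have hmax : max |x| |y| = y := by
      rw [abs_of_neg hxneg, abs_of_pos (by linarith)]
      exact max_eq_right (by nlinarith)
    rw [hmax] at hdescent
    have hgrowth := mul_le_eight_pow hb
    exact ⟨three_pow_le_of_two_pow_le (by lia) hdescent,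
      three_pow_le_of_two_pow_le (by lia) hdescent⟩

theorem cube_add_cube_ne_of_isCoprime {b c : ℕ} (hc : 0 < c) (hxy : IsCoprime x y) (hy : 0 < y) :
    x ^ 3 + y ^ 3 ≠ 9 * 27 ^ b * (3 ^ c * x + y) ^ 3 := by
  intro h
  have hK : (9 * 27 ^ b : ℤ) = 3 ^ (3 * b + 2) := by rw [pow_add, pow_mul]; norm_num; ring
  have hKgt : (1 : ℤ) < 9 * 27 ^ b := by rw [hK]; exact one_lt_pow₀ (by norm_num) (by lia)
  have hTgt : (1 : ℤ) < 3 ^ c := one_lt_pow₀ (by norm_num) hc.ne'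
  have hxneg := neg_of_cube_add_cube_eq hKgt (by lia) hy h
  have hform := linear_form_pos_of_cube_add_cube_eq hKgt hTgt hy h
  obtain ⟨hy_large, hy_large'⟩ := three_pow_le_of_cube_add_cube_eq hc hxy hxneg hform h
  have hx_le : -x ≤ 3 ^ (3 * b + 2) := by
    have := Int.le_of_dvd (by lia) ((neg_dvd).2 (dvd_sub_one_of_cube_add_cube_eq hxy h))
    lia
  have hlt : y < (-x) ^ 3000 := by
    refine lt_pow_of_cube_eq (z := 3 ^ b * (3 ^ c * x + y)) ?_ (by lia) hy_large
    rw [mul_pow, ← pow_mul, mul_comm b, pow_mul]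
    norm_num
    linear_combination h
  have hle : (-x) ^ 3000 ≤ 3 ^ ((3 * b + 2) * 3000) := by
    rw [pow_mul]
    exact pow_le_pow_left₀ (neg_nonneg.2 hxneg.le) hx_le _
  exact hlt.not_ge (hle.trans hy_large')

theorem rat_cube_add_one_ne {b c : ℕ} (hc : 0 < c) (r : ℚ) :
    r ^ 3 + 1 ≠ 9 * 27 ^ b * (3 ^ c * r + 1) ^ 3 := by
  intro h
  have hcop : IsCoprime r.num r.den := Int.isCoprime_iff_gcd_eq_one.2 r.reduced
  refine cube_add_cube_ne_of_isCoprime (b := b) hc hcop (mod_cast r.pos) ?_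
  have hcleared : (r.num : ℚ) ^ 3 + (r.den : ℚ) ^ 3 =
      9 * 27 ^ b * (3 ^ c * r.num + r.den) ^ 3 := by
    rw [← Rat.mul_den_eq_num r]
    linear_combination (r.den : ℚ) ^ 3 * h
  exact_mod_cast hcleared

theorem rat_cube_add_cube_eq_iff {b c : ℕ} (hc : 0 < c) {x y : ℚ} :
    x ^ 3 + y ^ 3 = 9 * 27 ^ b * (3 ^ c * x + y) ^ 3 ↔ x = 0 ∧ y = 0 := by
  refine ⟨fun h => ?_, by rintro ⟨rfl, rfl⟩; simp⟩
  have hy : y = 0 := by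
    by_contra hy
    refine rat_cube_add_one_ne (b := b) hc (x / y) ?_
    field_simp
    linear_combination h
  subst hy
  have hK : (1 : ℚ) < 9 * 27 ^ b * (3 ^ c) ^ 3 := by
    have h27 : (1 : ℚ) ≤ 27 ^ b * (3 ^ c) ^ 3 :=
      one_le_mul_of_one_le_of_one_le (one_le_pow₀ (by norm_num))
        (one_le_pow₀ (one_le_pow₀ (by norm_num)))
    linarith
  have hx : x ^ 3 * (9 * 27 ^ b * (3 ^ c) ^ 3 - 1) = 0 := by linear_combination -h
  simpa [(sub_pos.2 hK).ne'] using hx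

end Assembly

/-- **Conjecture 3.3 (Brassil–Reichstein, `conj:system BR`), proved in the paper:**
the system `Z₁³ + Z₂³ + 9Z₃³ = 0`, `3^a Z₁ + 3^b Z₂ + Z₃ = 0` has no solution
`(a, b, [Z₁:Z₂:Z₃])` where `a > b ≥ 0` are integers and `[Z₁:Z₂:Z₃] ∈ ℙ²(ℚ)`. -/
theorem brassil_reichstein_conjecture :
    ¬ ∃ (a b : ℕ) (p : Projectivization ℚ (Fin 3 → ℚ)) (Z : Fin 3 → ℚ) (hZ : Z ≠ 0),
      b < a ∧ p = Projectivization.mk ℚ Z hZ ∧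
      Z 0 ^ 3 + Z 1 ^ 3 + 9 * Z 2 ^ 3 = 0 ∧
      (3 : ℚ) ^ a * Z 0 + (3 : ℚ) ^ b * Z 1 + Z 2 = 0 := by
  rintro ⟨a, b, -, Z, hZ, hab, -, hcubic, hline⟩
  obtain ⟨c, rfl⟩ := Nat.exists_eq_add_of_lt hab
  have hZ₂ : Z 2 = -(3 ^ b * (3 ^ (c + 1) * Z 0 + Z 1)) := by
    linear_combination hline
  have hZ₀₁ : Z 0 ^ 3 + Z 1 ^ 3 = 9 * 27 ^ b * (3 ^ (c + 1) * Z 0 + Z 1) ^ 3 := by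
    rw [hZ₂, neg_pow, mul_pow, ← pow_mul, mul_comm b, pow_mul] at hcubic
    norm_num at hcubic
    linear_combination hcubic
  obtain ⟨hZ₀, hZ₁⟩ := (rat_cube_add_cube_eq_iff c.succ_pos).1 hZ₀₁
  refine hZ (funext fun i => ?_)
  fin_cases i <;> simp [hZ₀, hZ₁, hZ₂]
end

section
/- Let b ≥ 0 and w be integers with 3^{b+1} ∣ w, and let z₁, z₂, z₃ be nonzero integers with gcd(z₁, z₂, z₃) = 1 satisfying z₁³ + z₂³ + 9z₃³ = 0 and wz₁ + 3^b z₂ + z₃ = 0. Then 3 ∤ z₁z₂, there is an integer z₄ with 3 ∤ z₄ and −z₃ = 3^b z₄, and z₁ divides 3^{3b+2} − 1. Consequently |z₂³ + 9z₃³| = |z₁|³ < 3^{9b+6}. -/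
/-!
The linear equation makes every common divisor of `z₁` and `z₂` divide `z₃`, so `z₁` and `z₂` are
coprime. Then `z₁ * z₂` is coprime to `z₁ ^ 3 + z₂ ^ 3 = -9 * z₃ ^ 3`, hence prime to `3`. Modulo
`z₁` the linear equation reads `z₃ ≡ -3 ^ b * z₂`; substituting this into the cubic and cancelling
the unit `z₂ ^ 3` gives `3 ^ (3 * b + 2) ≡ 1`, which also bounds `|z₁|`.
-/

section CommRing

variable {R : Type*} [CommRing R]

theorem isCoprime_mul_pow_add_pow {x y : R} {m n : ℕ} (hxy : IsCoprime x y) (hm : m ≠ 0)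
    (hn : n ≠ 0) : IsCoprime (x * y) (x ^ m + y ^ n) := by
  have hx : IsCoprime x (x ^ m + y ^ n) := by
    obtain ⟨c, hc⟩ := dvd_pow_self x hm
    rw [hc]
    exact hxy.pow_right.mul_add_left_right c
  have hy : IsCoprime y (x ^ m + y ^ n) := by
    obtain ⟨c, hc⟩ := dvd_pow_self y hn
    rw [hc]
    exact hxy.symm.pow_right.add_mul_left_right c
  exact hx.mul_left hy

theorem exists_not_dvd_and_neg_eq_pow_mul {p w x y z : R} {b : ℕ} (hw : p ^ (b + 1) ∣ w)
    (hy : ¬ p ∣ y) (hlin : w * x + p ^ b * y + z = 0) :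
    ∃ t, ¬ p ∣ t ∧ -z = p ^ b * t := by
  obtain ⟨k, rfl⟩ := hw
  refine ⟨p * (k * x) + y, ?_, by linear_combination -hlin⟩
  rwa [dvd_add_right (dvd_mul_right p (k * x))]

theorem dvd_mul_pow_sub_one_of_isCoprime {c u w x y z : R} {n : ℕ} (hn : Odd n)
    (hxy : IsCoprime x y) (hpow : x ^ n + y ^ n + c * z ^ n = 0)
    (hlin : w * x + u * y + z = 0) : x ∣ c * u ^ n - 1 := by
  have dvd_linear : x ∣ u * y + z := ⟨-w, by linear_combination hlin⟩
  have dvd_powers : x ∣ (u * y) ^ n + z ^ n := dvd_linear.trans (hn.add_dvd_pow_add_pow _ _)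
  have factor_eq : y ^ n * (c * u ^ n - 1) = c * ((u * y) ^ n + z ^ n) + x ^ n := by
    rw [mul_pow]
    linear_combination -hpow
  refine hxy.pow_right.dvd_of_dvd_mul_left (y := y ^ n) ?_
  rw [factor_eq]
  exact (dvd_powers.mul_left c).add (dvd_pow_self x hn.pos.ne')

end CommRing

theorem isCoprime_of_gcd_gcd_eq_one_of_linear {u w x y z : ℤ}
    (hgcd : Int.gcd (Int.gcd x y) z = 1) (hlin : w * x + u * y + z = 0) : IsCoprime x y := by
  have gcd_dvd : (Int.gcd x y : ℤ) ∣ z := by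
    rw [eq_neg_of_add_eq_zero_right hlin, dvd_neg]
    exact ((Int.gcd_dvd_left x y).mul_left w).add ((Int.gcd_dvd_right x y).mul_left u)
  rw [Int.isCoprime_iff_gcd_eq_one, ← hgcd, Int.gcd_eq_natAbs_left gcd_dvd,
    Int.natAbs_natCast]

theorem abs_lt_of_dvd_sub_one {a m : ℤ} (hm : 1 < m) (h : a ∣ m - 1) : |a| < m :=
  Int.lt_of_le_sub_one (Int.le_of_dvd (sub_pos.mpr hm) ((abs_dvd a _).mpr h))

/-- **First step of the proof of Theorem `thm:new system`:** if `3^{b+1} ∣ w` and nonzero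
coprime integers `z₁, z₂, z₃` satisfy `z₁³ + z₂³ + 9z₃³ = 0` and `wz₁ + 3^b z₂ + z₃ = 0`,
then `3 ∤ z₁z₂`, `-z₃ = 3^b z₄` with `3 ∤ z₄`, `z₁ ∣ 3^{3b+2} - 1`, and consequently
`|z₂³ + 9z₃³| = |z₁|³ < 3^{9b+6}`. -/
theorem divisibility_and_bound_of_solution
    (b : ℕ) (w z₁ z₂ z₃ : ℤ) (hw : (3 : ℤ) ^ (b + 1) ∣ w)
    (hz₁ : z₁ ≠ 0) (hz₂ : z₂ ≠ 0) (hz₃ : z₃ ≠ 0)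
    (hgcd : Int.gcd (Int.gcd z₁ z₂) z₃ = 1)
    (e₁ : z₁ ^ 3 + z₂ ^ 3 + 9 * z₃ ^ 3 = 0)
    (e₂ : w * z₁ + 3 ^ b * z₂ + z₃ = 0) :
    ¬ (3 : ℤ) ∣ z₁ * z₂ ∧
    (∃ z₄ : ℤ, ¬ (3 : ℤ) ∣ z₄ ∧ -z₃ = 3 ^ b * z₄) ∧
    z₁ ∣ 3 ^ (3 * b + 2) - 1 ∧
    |z₂ ^ 3 + 9 * z₃ ^ 3| = |z₁| ^ 3 ∧
    |z₁| ^ 3 < 3 ^ (9 * b + 6) := by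
  have coprime : IsCoprime z₁ z₂ := isCoprime_of_gcd_gcd_eq_one_of_linear hgcd e₂
  have not_dvd_mul : ¬ (3 : ℤ) ∣ z₁ * z₂ := by
    have three_dvd : (3 : ℤ) ∣ z₁ ^ 3 + z₂ ^ 3 := ⟨-3 * z₃ ^ 3, by linear_combination e₁⟩
    exact fun h ↦ Int.prime_three.not_isUnit <|
      (isCoprime_mul_pow_add_pow coprime three_ne_zero three_ne_zero).isUnit_of_dvd' h three_dvd
  have dvd_sub_one : z₁ ∣ 3 ^ (3 * b + 2) - 1 := by
    rw [show (3 : ℤ) ^ (3 * b + 2) = 9 * (3 ^ b) ^ 3 by ring]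
    exact dvd_mul_pow_sub_one_of_isCoprime (by decide) coprime e₁ e₂
  have abs_lt : |z₁| < 3 ^ (3 * b + 2) :=
    abs_lt_of_dvd_sub_one (one_lt_pow₀ (by norm_num) (by lia)) dvd_sub_one
  refine ⟨not_dvd_mul, ?_, dvd_sub_one, ?_, ?_⟩
  · exact exists_not_dvd_and_neg_eq_pow_mul hw (fun h ↦ not_dvd_mul (h.mul_left z₁)) e₂
  · rw [← abs_pow, ← abs_neg]
    congr 1
    linear_combination -e₁
  · calc
      |z₁| ^ 3 < (3 ^ (3 * b + 2)) ^ 3 := pow_lt_pow_left₀ abs_lt (abs_nonneg z₁) three_ne_zero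
      _ = 3 ^ (9 * b + 6) := by ring
end

section
/- Let b ≥ 0 and w be integers with 3^{b+1} ∣ w, and let z₁, z₂, z₃ be nonzero integers with gcd(z₁, z₂, z₃) = 1 satisfying z₁³ + z₂³ + 9z₃³ = 0 and wz₁ + 3^b z₂ + z₃ = 0, and write −z₃ = 3^b z₄ with 3 ∤ z₄. Then there exist integers α and β such that z₁ + z₂ = 3^{3b+1}α³, z₁² − z₁z₂ + z₂² = 3β³, αβ = z₄, 3 ∤ αβ, and gcd(α, β) = 1. -/
/-!
Put `x = z₁`, `y = z₂` and `z = -z₃`, so that `x³ + y³ = 9z³` with `x`, `y` coprime because `9` is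
cube-free. By Fermat's little theorem `x + y = 3s`, and then `x² - xy + y² = 3t` with
`t = 3s² - xy` and `st = z³`. Since `x + y = 3s` is coprime to `xy`, it is coprime to `t`. Hence
`s = α³` and `t = β³` with `αβ = z`, and as `3 ∤ β`, every power of `3` dividing `z` divides `α`.
-/

theorem isCoprime_add_mul {R : Type*} [CommRing R] {x y : R} (hxy : IsCoprime x y) :
    IsCoprime (x + y) (x * y) := by
  refine IsCoprime.mul_right ?_ ?_
  · simpa only [mul_one, add_comm] using hxy.symm.add_mul_left_left 1
  · simpa only [mul_one] using hxy.add_mul_left_left 1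

theorem isCoprime_add_mul_add_sub_mul {R : Type*} [CommRing R] {x y : R} (hxy : IsCoprime x y)
    (k : R) : IsCoprime (x + y) (k * (x + y) - x * y) := by
  simpa only [neg_add_eq_sub] using (isCoprime_add_mul hxy).neg_right.add_mul_right_right k

theorem natCast_dvd_pow_add_pow_iff (p : ℕ) [Fact p.Prime] (x y : ℤ) :
    (p : ℤ) ∣ x ^ p + y ^ p ↔ (p : ℤ) ∣ x + y := by
  simp only [← ZMod.intCast_zmod_eq_zero_iff_dvd, Int.cast_add, Int.cast_pow, ZMod.pow_card]

theorem isCoprime_of_pow_add_pow_add_mul_pow_eq_zero {n : ℕ} {c x y z : ℤ}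
    (hc : ∀ d : ℤ, d ^ n ∣ c → IsUnit d) (hgcd : Int.gcd (Int.gcd x y) z = 1)
    (h : x ^ n + y ^ n + c * z ^ n = 0) : IsCoprime x y := by
  have hgz : IsCoprime ((Int.gcd x y : ℤ) ^ n) (z ^ n) :=
    (Int.isCoprime_iff_gcd_eq_one.2 hgcd).pow
  have hdvd : (Int.gcd x y : ℤ) ^ n ∣ x ^ n + y ^ n :=
    dvd_add (pow_dvd_pow_of_dvd (Int.gcd_dvd_left x y) n)
      (pow_dvd_pow_of_dvd (Int.gcd_dvd_right x y) n)
  have hgc : (Int.gcd x y : ℤ) ^ n ∣ c :=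
    hgz.dvd_of_dvd_mul_right ((dvd_add_right hdvd).1 (h ▸ dvd_zero _))
  exact Int.isCoprime_iff_gcd_eq_one.2 (Nat.isUnit_iff.1 (Int.ofNat_isUnit.1 (hc _ hgc)))

theorem isUnit_of_cube_dvd_nine {d : ℤ} (hd : d ^ 3 ∣ 9) : IsUnit d := by
  have hdvd : d.natAbs ^ 3 ∣ 9 := by simpa [Int.natAbs_pow] using Int.natAbs_dvd_natAbs.2 hd
  have hlt : d.natAbs < 3 := lt_of_pow_lt_pow_left₀ 3 (by norm_num)
    ((Nat.le_of_dvd (by norm_num) hdvd).trans_lt (by norm_num))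
  rw [Int.isUnit_iff_natAbs_eq]
  interval_cases d.natAbs <;> omega

theorem exists_eq_pow_eq_pow_mul_eq_of_mul_eq_pow_odd {n : ℕ} (hn : Odd n) {u v z : ℤ}
    (huv : IsCoprime u v) (h : u * v = z ^ n) :
    ∃ α β : ℤ, u = α ^ n ∧ v = β ^ n ∧ α * β = z := by
  obtain ⟨α, rfl⟩ := Int.eq_pow_of_mul_eq_pow_odd_left huv hn h
  obtain ⟨β, rfl⟩ := Int.eq_pow_of_mul_eq_pow_odd_right huv hn h
  exact ⟨α, β, rfl, rfl, hn.pow_injective (by simpa only [mul_pow] using h)⟩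

theorem exists_cubes_of_cube_add_cube_eq_nine_mul_cube {x y z : ℤ} (hxy : IsCoprime x y)
    (h : x ^ 3 + y ^ 3 = 9 * z ^ 3) :
    ∃ α β : ℤ, x + y = 3 * α ^ 3 ∧ x ^ 2 - x * y + y ^ 2 = 3 * β ^ 3 ∧ α * β = z ∧
      IsCoprime (3 * α) β := by
  obtain ⟨s, hs⟩ : 3 ∣ x + y :=
    (natCast_dvd_pow_add_pow_iff 3 x y).1 ⟨3 * z ^ 3, by rw [h]; push_cast; ring⟩
  have hcop : IsCoprime (3 * s) (3 * s ^ 2 - x * y) := by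
    have h_coprime := isCoprime_add_mul_add_sub_mul hxy s
    rwa [hs, show s * (3 * s) = 3 * s ^ 2 by ring] at h_coprime
  have hquad : x ^ 2 - x * y + y ^ 2 = 3 * (3 * s ^ 2 - x * y) := by
    linear_combination (x + y + 3 * s) * hs
  have hprod : s * (3 * s ^ 2 - x * y) = z ^ 3 := by
    refine mul_left_cancel₀ (show (9 : ℤ) ≠ 0 by norm_num) ?_
    calc 9 * (s * (3 * s ^ 2 - x * y))
        = (3 * s) * (3 * (3 * s ^ 2 - x * y)) := by ring
      _ = (x + y) * (x ^ 2 - x * y + y ^ 2) := by rw [hs, hquad]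
      _ = 9 * z ^ 3 := by rw [← h]; ring
  obtain ⟨α, β, rfl, hβ, hαβ⟩ :=
    exists_eq_pow_eq_pow_mul_eq_of_mul_eq_pow_odd (by decide) hcop.of_mul_left_right hprod
  rw [hβ] at hquad hcop
  refine ⟨α, β, hs, hquad, hαβ, IsCoprime.mul_left ?_ ?_⟩
  · exact (IsCoprime.pow_right_iff three_pos).1 hcop.of_mul_left_left
  · exact (IsCoprime.pow_iff three_pos three_pos).1 hcop.of_mul_left_right

theorem exists_alpha_beta_of_solution_general
    (b : ℕ) (z₁ z₂ z₃ z₄ : ℤ)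
    (hgcd : Int.gcd (Int.gcd z₁ z₂) z₃ = 1)
    (e₁ : z₁ ^ 3 + z₂ ^ 3 + 9 * z₃ ^ 3 = 0)
    (hz₄ : -z₃ = 3 ^ b * z₄) :
    ∃ α β : ℤ,
      z₁ + z₂ = 3 ^ (3 * b + 1) * α ^ 3 ∧
      z₁ ^ 2 - z₁ * z₂ + z₂ ^ 2 = 3 * β ^ 3 ∧
      α * β = z₄ ∧
      ¬ (3 : ℤ) ∣ β ∧
      Int.gcd α β = 1 := by
  have hcop : IsCoprime z₁ z₂ :=
    isCoprime_of_pow_add_pow_add_mul_pow_eq_zero (fun _ ↦ isUnit_of_cube_dvd_nine) hgcd e₁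
  obtain ⟨γ, β, hadd, hquad, hγβ, h3γβ⟩ :=
    exists_cubes_of_cube_add_cube_eq_nine_mul_cube hcop (z := -z₃) (by linear_combination e₁)
  have h3β : IsCoprime 3 β := h3γβ.of_mul_left_left
  obtain ⟨α, rfl⟩ : 3 ^ b ∣ γ :=
    h3β.pow_left.dvd_of_dvd_mul_right ⟨z₄, hγβ.trans hz₄⟩
  refine ⟨α, β, by rw [hadd]; ring, hquad, ?_, Int.prime_three.coprime_iff_not_dvd.1 h3β, ?_⟩
  · exact mul_left_cancel₀ (pow_ne_zero b three_ne_zero) (by rw [← mul_assoc, hγβ, hz₄])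
  · exact Int.isCoprime_iff_gcd_eq_one.1 h3γβ.of_mul_left_right.of_mul_left_right

/-- **Equation (`eq:alpha and beta`) in the proof of Theorem `thm:new system`:** if
`3^{b+1} ∣ w` and nonzero coprime integers `z₁, z₂, z₃` satisfy `z₁³ + z₂³ + 9z₃³ = 0` and
`wz₁ + 3^b z₂ + z₃ = 0`, and `-z₃ = 3^b z₄` with `3 ∤ z₄`, then there are integers `α, β`
with `z₁ + z₂ = 3^{3b+1}α³`, `z₁² - z₁z₂ + z₂² = 3β³`, `αβ = z₄`, `3 ∤ αβ` and
`gcd(α, β) = 1`. -/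
theorem exists_alpha_beta_of_solution
    (b : ℕ) (w z₁ z₂ z₃ z₄ : ℤ) (hw : (3 : ℤ) ^ (b + 1) ∣ w)
    (hz₁ : z₁ ≠ 0) (hz₂ : z₂ ≠ 0) (hz₃ : z₃ ≠ 0)
    (hgcd : Int.gcd (Int.gcd z₁ z₂) z₃ = 1)
    (e₁ : z₁ ^ 3 + z₂ ^ 3 + 9 * z₃ ^ 3 = 0)
    (e₂ : w * z₁ + 3 ^ b * z₂ + z₃ = 0)
    (hz₄ : -z₃ = 3 ^ b * z₄) (h3z₄ : ¬ (3 : ℤ) ∣ z₄) :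
    ∃ α β : ℤ,
      z₁ + z₂ = 3 ^ (3 * b + 1) * α ^ 3 ∧
      z₁ ^ 2 - z₁ * z₂ + z₂ ^ 2 = 3 * β ^ 3 ∧
      α * β = z₄ ∧
      ¬ (3 : ℤ) ∣ α * β ∧
      Int.gcd α β = 1 := by
  obtain ⟨α, β, hadd, hquad, hαβ, -, hgcd'⟩ :=
    exists_alpha_beta_of_solution_general b z₁ z₂ z₃ z₄ hgcd e₁ hz₄
  exact ⟨α, β, hadd, hquad, hαβ, hαβ ▸ h3z₄, hgcd'⟩
end
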